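/- The Lagrange spectrum is contained in the Markov spectrum, L ⊆ M, and both L and M are closed subsets of ℝ. -/

import Mathlib

open scoped ENNReal

/-- The distance from a real number to the nearest integer. -/
noncomputable def distNearestInt (x : ℝ) : ℝ := |x - round x|

/-- The best constant of Diophantine approximation of `α`,
`ℓ(α) = limsup_{q → ∞} 1 / (q ⬝ ‖q α‖) ∈ [0, ∞]`. -/
noncomputable def lagrangeVal (α : ℝ) : ℝ≥0∞ :=
  Filter.limsup (fun q : ℕ => ENNReal.ofReal (1 / (q * distNearestInt (q * α)))) Filter.atTop

/-- The Lagrange spectrum: the set of finite values `ℓ(α)` over irrational `α`. -/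
def LagrangeSpectrum : Set ℝ :=
  {t | ∃ α : ℝ, Irrational α ∧ lagrangeVal α ≠ ⊤ ∧ (lagrangeVal α).toReal = t}

/-- The best constant of Diophantine approximation of the binary quadratic form
`h(x,y) = a x² + b x y + c y²`, namely `m(h) = sup_{(p,q) ≠ (0,0)} √Δ(h) / |h(p,q)| ∈ (0, ∞]`. -/
noncomputable def markovVal (a b c : ℝ) : ℝ≥0∞ :=
  ⨆ (pq : ℤ × ℤ) (_ : pq ≠ (0, 0)),
    ENNReal.ofReal (Real.sqrt (b ^ 2 - 4 * a * c)) /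
      ENNReal.ofReal |a * (pq.1 : ℝ) ^ 2 + b * pq.1 * pq.2 + c * (pq.2 : ℝ) ^ 2|

/-- The Markov spectrum: the set of finite values `m(h)` over real indefinite binary
quadratic forms `h` with positive discriminant. -/
def MarkovSpectrum : Set ℝ :=
  {t | ∃ a b c : ℝ, 0 < b ^ 2 - 4 * a * c ∧ markovVal a b c ≠ ⊤ ∧ (markovVal a b c).toReal = t}

theorem Irrational.exists_pos_le_abs_mul_sub {α : ℝ} (hα : Irrational α) (N : ℕ) :
    ∃ δ > 0, ∀ P Q : ℤ, Q ≠ 0 → |Q| ≤ N → δ ≤ |(Q : ℝ) * α - P| := by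
  induction N with
  | zero =>
    refine ⟨1, one_pos, fun P Q hQ hQN => absurd ?_ hQ⟩
    simpa using hQN
  | succ N ih =>
    obtain ⟨δ, hδ, h⟩ := ih
    have hirr : Irrational (((N + 1 : ℕ) : ℝ) * α) := hα.natCast_mul (Nat.succ_ne_zero N)
    refine ⟨min δ |((N + 1 : ℕ) : ℝ) * α - round (((N + 1 : ℕ) : ℝ) * α)|,
      lt_min hδ (abs_pos.2 (sub_ne_zero.2 (hirr.ne_int _))), fun P Q hQ hQN => ?_⟩
    rcases (Int.le_add_one_iff.1 (by exact_mod_cast hQN : |Q| ≤ (N : ℤ) + 1)) with hle | heq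
    · exact (min_le_left _ _).trans (h P Q hQ hle)
    · refine (min_le_right _ _).trans ?_
      rcases (abs_eq (by positivity)).1 heq with rfl | rfl
      · simpa using round_le (((N + 1 : ℕ) : ℝ) * α) P
      · have := round_le (((N + 1 : ℕ) : ℝ) * α) (-P)
        rw [abs_sub_comm _ ((-P : ℤ) : ℝ)] at this
        convert this using 2
        push_cast
        ring

theorem distNearestInt_le_abs_mul_sub (α : ℝ) (P Q : ℤ) :
    distNearestInt (Q.natAbs * α) ≤ |(Q : ℝ) * α - P| := by
  rcases Int.natAbs_eq Q with h | h
  · have hQ : (Q : ℝ) = (Q.natAbs : ℝ) := (congrArg Int.cast h).trans (Int.cast_natCast _)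
    rw [hQ]
    exact round_le _ _
  · have hQ : (Q : ℝ) = -(Q.natAbs : ℝ) := by exact_mod_cast h
    have := round_le ((Q.natAbs : ℝ) * α) (-P)
    rw [abs_sub_comm _ ((-P : ℤ) : ℝ)] at this
    rw [hQ]
    refine this.trans (le_of_eq (congrArg _ ?_))
    push_cast
    ring

theorem distNearestInt_pos {α : ℝ} (hα : Irrational α) {q : ℕ} (hq : q ≠ 0) :
    0 < distNearestInt (q * α) :=
  abs_pos.2 (sub_ne_zero.2 ((hα.natCast_mul hq).ne_int _))

theorem lagrangeVal_le_iff {α t : ℝ} (hα : Irrational α) (ht : 0 ≤ t) :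
    lagrangeVal α ≤ ENNReal.ofReal t ↔
      ∀ s > t, ∃ N : ℕ, ∀ P Q : ℤ, N ≤ |Q| → 1 ≤ s * |(Q : ℝ) * (Q * α - P)| := by
  rw [lagrangeVal, Filter.limsup_le_iff]
  constructor
  · intro h s hs
    have hs0 : 0 < s := ht.trans_lt hs
    obtain ⟨N, hN⟩ := Filter.eventually_atTop.1
      (h (ENNReal.ofReal s) ((ENNReal.ofReal_lt_ofReal_iff hs0).2 hs))
    refine ⟨N + 1, fun P Q hQ => ?_⟩
    have hQ' : N + 1 ≤ Q.natAbs := by rw [Int.abs_eq_natAbs] at hQ; omega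
    have h1 := hN Q.natAbs (by omega)
    rw [ENNReal.ofReal_lt_ofReal_iff hs0] at h1
    have hq : (0 : ℝ) < Q.natAbs := by exact_mod_cast (by omega : 0 < Q.natAbs)
    have hd := distNearestInt_pos hα (by omega : Q.natAbs ≠ 0)
    rw [div_lt_iff₀ (by positivity)] at h1
    have h2 : |(Q : ℝ)| = Q.natAbs := by simp [Nat.cast_natAbs]
    rw [abs_mul, h2]
    refine h1.le.trans ?_
    gcongr
    exact distNearestInt_le_abs_mul_sub α P Q
  · intro h y hy
    obtain ⟨z, hz1, hz2⟩ := ENNReal.lt_iff_exists_real_btwn.1 hy |>.imp fun z hz => hz.2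
    have hz : t < z := by
      by_contra! hc
      exact absurd hz1 (not_lt.2 (ENNReal.ofReal_le_ofReal hc))
    obtain ⟨N, hN⟩ := h z hz
    filter_upwards [Filter.eventually_ge_atTop (N + 1)] with q hq
    refine lt_of_le_of_lt (ENNReal.ofReal_le_ofReal ?_) hz2
    have h1 := hN (round (q * α)) q (by simpa using by omega)
    have hq' : (0 : ℝ) < q := by exact_mod_cast (by omega : 0 < q)
    have hd := distNearestInt_pos hα (by omega : q ≠ 0)
    rw [div_le_iff₀ (by positivity)]
    simpa [abs_mul, distNearestInt] using h1

theorem le_lagrangeVal_iff {α t : ℝ} (hα : Irrational α) (ht : 0 < t) :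
    ENNReal.ofReal t ≤ lagrangeVal α ↔
      ∀ s < t, 0 < s → ∀ N : ℕ, ∃ P Q : ℤ, N ≤ |Q| ∧ s * |(Q : ℝ) * (Q * α - P)| ≤ 1 := by
  rw [lagrangeVal, Filter.le_limsup_iff]
  constructor
  · intro h s hs hs0 N
    obtain ⟨q, hq, h1⟩ := Filter.frequently_atTop.1
      (h (ENNReal.ofReal s) ((ENNReal.ofReal_lt_ofReal_iff ht).2 hs)) (N + 1)
    refine ⟨round (q * α), q, by simpa using by omega, ?_⟩
    have hq' : (0 : ℝ) < q := by exact_mod_cast (by omega : 0 < q)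
    have hd := distNearestInt_pos hα (by omega : q ≠ 0)
    rw [ENNReal.ofReal_lt_ofReal_iff (by positivity), lt_div_iff₀ (by positivity)] at h1
    simpa [abs_mul, distNearestInt] using h1.le
  · intro h y hy
    obtain ⟨z, hz0, hz1, hz2⟩ := ENNReal.lt_iff_exists_real_btwn.1 hy
    have hz : z < t := (ENNReal.ofReal_lt_ofReal_iff ht).1 hz2
    have hz' : 0 < z := by
      by_contra! hc
      rw [ENNReal.ofReal_of_nonpos hc] at hz1
      exact absurd hz1 (by simp)
    refine Filter.frequently_atTop.2 fun N => ?_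
    obtain ⟨P, Q, hQ, h1⟩ := h z hz hz' (N + 1)
    have hQ' : N + 1 ≤ Q.natAbs := by rw [Int.abs_eq_natAbs] at hQ; omega
    refine ⟨Q.natAbs, by omega, hz1.trans_le (ENNReal.ofReal_le_ofReal ?_)⟩
    have hq : (0 : ℝ) < Q.natAbs := by exact_mod_cast (by omega : 0 < Q.natAbs)
    have hd := distNearestInt_pos hα (by omega : Q.natAbs ≠ 0)
    rw [le_div_iff₀ (by positivity)]
    have h2 : |(Q : ℝ)| = Q.natAbs := by simp [Nat.cast_natAbs]
    rw [abs_mul, h2] at h1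
    refine le_trans ?_ h1
    gcongr
    exact distNearestInt_le_abs_mul_sub α P Q

theorem one_le_lagrangeVal {α : ℝ} (hα : Irrational α) : 1 ≤ lagrangeVal α := by
  rw [← ENNReal.ofReal_one, le_lagrangeVal_iff hα one_pos]
  intro s hs hs0 N
  obtain ⟨δ, hδ, h⟩ := hα.exists_pos_le_abs_mul_sub N
  obtain ⟨n, hn⟩ := exists_nat_one_div_lt hδ
  obtain ⟨k, hk0, hkn, hk⟩ := Real.exists_nat_abs_mul_sub_round_le α n.succ_pos
  have hkR : (0 : ℝ) < k := by exact_mod_cast hk0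
  refine ⟨round (k * α), k, ?_, ?_⟩
  · by_contra! hlt
    have h1 := h (round (k * α)) k (by omega) hlt.le
    push_cast at h1 hk
    have h2 : 1 / ((n : ℝ) + 1 + 1) ≤ 1 / ((n : ℝ) + 1) := by gcongr; linarith
    linarith
  · have hkn' : (k : ℝ) ≤ n + 1 := by exact_mod_cast hkn
    have h1 : (k : ℝ) * |k * α - round (k * α)| ≤ 1 := by
      refine (mul_le_mul_of_nonneg_left hk hkR.le).trans ?_
      push_cast
      rw [mul_one_div, div_le_one (by positivity)]
      linarith
    push_cast
    rw [abs_mul, abs_of_pos hkR]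
    nlinarith

/-- `t` is the best approximation constant of `α`, spelled out with integer vectors. -/
def IsLagrangeConst (α t : ℝ) : Prop :=
  (∀ s > t, ∃ N : ℕ, ∀ P Q : ℤ, N ≤ |Q| → 1 ≤ s * |(Q : ℝ) * (Q * α - P)|) ∧
    ∀ s < t, 0 < s → ∀ N : ℕ, ∃ P Q : ℤ, N ≤ |Q| ∧ s * |(Q : ℝ) * (Q * α - P)| ≤ 1

theorem mem_lagrangeSpectrum_iff {t : ℝ} :
    t ∈ LagrangeSpectrum ↔ 1 ≤ t ∧ ∃ α, Irrational α ∧ IsLagrangeConst α t := by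
  constructor
  · rintro ⟨α, hα, hfin, rfl⟩
    have h1 : 1 ≤ (lagrangeVal α).toReal := by
      simpa using ENNReal.toReal_mono hfin (one_le_lagrangeVal hα)
    have h2 := ENNReal.ofReal_toReal hfin
    exact ⟨h1, α, hα, (lagrangeVal_le_iff hα (by linarith)).1 h2.ge,
      (le_lagrangeVal_iff hα (by linarith)).1 h2.le⟩
  · rintro ⟨ht, α, hα, h1, h2⟩
    have h : lagrangeVal α = ENNReal.ofReal t :=
      le_antisymm ((lagrangeVal_le_iff hα (by linarith)).2 h1)
        ((le_lagrangeVal_iff hα (by linarith)).2 h2)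
    exact ⟨α, hα, by simp [h], by rw [h, ENNReal.toReal_ofReal (by linarith)]⟩

theorem mem_markovSpectrum_of_roots {t ξ η : ℝ} (ht : 0 < t) (hd : |ξ - η| = t)
    (h : ∀ x y : ℤ, (x, y) ≠ (0, 0) → 1 ≤ |(x : ℝ) - ξ * y| * |(x : ℝ) - η * y|) :
    t ∈ MarkovSpectrum := by
  have hdisc : (-(ξ + η)) ^ 2 - 4 * 1 * (ξ * η) = t ^ 2 := by
    rw [← hd, sq_abs]; ring
  have hform (x y : ℝ) : |1 * x ^ 2 + -(ξ + η) * x * y + ξ * η * y ^ 2| =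
      |x - ξ * y| * |x - η * y| := by
    rw [← abs_mul]; congr 1; ring
  have hm : markovVal 1 (-(ξ + η)) (ξ * η) = ENNReal.ofReal t := by
    simp only [markovVal, hdisc, hform, Real.sqrt_sq ht.le]
    refine le_antisymm (iSup₂_le fun v hv => ?_) ?_
    · refine ENNReal.div_le_of_le_mul ?_
      rw [← ENNReal.ofReal_mul ht.le]
      exact ENNReal.ofReal_le_ofReal (le_mul_of_one_le_right ht.le (h v.1 v.2 hv))
    · refine le_iSup₂_of_le ((1, 0) : ℤ × ℤ) (by simp) ?_
      simp
  exact ⟨1, -(ξ + η), ξ * η, by rw [hdisc]; positivity, by rw [hm]; exact ENNReal.ofReal_ne_top,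
    by rw [hm, ENNReal.toReal_ofReal ht.le]⟩

/-- A form given by its two roots, the first coordinate vector being almost extremal. -/
def IsApproxMarkovConst (t : ℝ) : Prop :=
  ∀ ε > 0, ∃ ξ η : ℝ, 0 ≤ η ∧ η ≤ 1 ∧ t - ε ≤ |ξ - η| ∧
    ∀ x y : ℤ, (x, y) ≠ (0, 0) → |ξ - η| ≤ (t + ε) * (|(x : ℝ) - ξ * y| * |(x : ℝ) - η * y|)

theorem IsApproxMarkovConst.one_half_le {t : ℝ} (ht : 0 < t) (h : IsApproxMarkovConst t) :
    1 / 2 ≤ t := by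
  obtain ⟨ξ, η, -, -, h1, h2⟩ := h (t / 7) (by positivity)
  have h3 := h2 1 0 (by simp)
  have h4 := h2 (round η) 1 (by simp)
  have h5 := abs_sub_round η
  rw [abs_sub_comm] at h5
  simp only [Int.cast_one, Int.cast_zero, mul_zero, sub_zero, abs_one, mul_one] at h3 h4
  have h6 : |(round η : ℝ) - ξ| ≤ 1 / 2 + |ξ - η| := by
    calc |(round η : ℝ) - ξ| = |(round η - η) - (ξ - η)| := by ring_nf
      _ ≤ _ := (abs_sub _ _).trans (by linarith)
  have h7 : |(round η : ℝ) - ξ| * |(round η : ℝ) - η| ≤ (1 / 2 + |ξ - η|) * (1 / 2) := by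
    gcongr
  nlinarith

theorem IsApproxMarkovConst.mem_markovSpectrum {t : ℝ} (ht : 0 < t)
    (h : IsApproxMarkovConst t) : t ∈ MarkovSpectrum := by
  choose ξ η h0 h1 h2 h3 using fun n : ℕ => h (1 / ((n : ℝ) + 1)) (by positivity)
  have hmem (n : ℕ) : (ξ n, η n) ∈ Set.Icc (-t - 1) (t + 2) ×ˢ Set.Icc (0 : ℝ) 1 := by
    have h4 := h3 n 1 0 (by simp)
    have h5 : 1 / ((n : ℝ) + 1) ≤ 1 := by
      rw [div_le_one (by positivity)]; linarith [n.cast_nonneg (α := ℝ)]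
    simp only [Int.cast_one, Int.cast_zero, mul_zero, sub_zero, abs_one, mul_one] at h4
    have h6 := abs_le.1 (h4.trans (by linarith : t + 1 / ((n : ℝ) + 1) ≤ t + 1))
    have := h0 n
    have := h1 n
    exact ⟨⟨by linarith, by linarith⟩, ⟨h0 n, h1 n⟩⟩
  obtain ⟨⟨ξ', η'⟩, -, φ, hφ, hlim⟩ := (isCompact_Icc.prod isCompact_Icc).tendsto_subseq hmem
  have hξ : Filter.Tendsto (fun n => ξ (φ n)) Filter.atTop (nhds ξ') :=
    (continuous_fst.tendsto _).comp hlim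
  have hη : Filter.Tendsto (fun n => η (φ n)) Filter.atTop (nhds η') :=
    (continuous_snd.tendsto _).comp hlim
  have hε : Filter.Tendsto (fun n => 1 / ((φ n : ℝ) + 1)) Filter.atTop (nhds 0) :=
    tendsto_one_div_add_atTop_nhds_zero_nat.comp hφ.tendsto_atTop
  have hge : t - 0 ≤ |ξ' - η'| :=
    le_of_tendsto_of_tendsto' (tendsto_const_nhds.sub hε) (hξ.sub hη).abs fun n => h2 (φ n)
  have hle (x y : ℤ) (hxy : (x, y) ≠ (0, 0)) :
      |ξ' - η'| ≤ (t + 0) * (|(x : ℝ) - ξ' * y| * |(x : ℝ) - η' * y|) :=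
    le_of_tendsto_of_tendsto' (hξ.sub hη).abs ((tendsto_const_nhds.add hε).mul
      ((tendsto_const_nhds.sub (hξ.mul_const _)).abs.mul
        (tendsto_const_nhds.sub (hη.mul_const _)).abs)) fun n => h3 (φ n) x y hxy
  have h10 := hle 1 0 (by simp)
  simp only [Int.cast_one, Int.cast_zero, mul_zero, sub_zero, abs_one, mul_one, add_zero]
    at h10 hge
  have heq := le_antisymm h10 hge
  refine mem_markovSpectrum_of_roots ht heq fun x y hxy => ?_
  have := hle x y hxy
  rw [heq, add_zero] at this
  exact le_of_mul_le_mul_left (by linarith) ht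

theorem exists_primitive_basis {x y : ℤ} (h : (x, y) ≠ (0, 0)) :
    ∃ d p q r s : ℤ, 1 ≤ d ∧ x = d * p ∧ y = d * q ∧ p * s - q * r = 1 := by
  have hg : Int.gcd x y ≠ 0 := by
    rw [Ne, Int.gcd_eq_zero_iff]
    simpa using h
  obtain ⟨p, hp⟩ := Int.gcd_dvd_left x y
  obtain ⟨q, hq⟩ := Int.gcd_dvd_right x y
  have hb := Int.gcd_eq_gcd_ab x y
  refine ⟨Int.gcd x y, p, q, -Int.gcdB x y, Int.gcdA x y, by omega, hp, hq, ?_⟩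
  have hg' : (Int.gcd x y : ℤ) ≠ 0 := by exact_mod_cast hg
  apply mul_left_cancel₀ hg'
  linear_combination -hb - Int.gcdA x y * hp - Int.gcdB x y * hq

theorem mem_markovSpectrum_bounds {t : ℝ} (h : t ∈ MarkovSpectrum) :
    ∃ a b c : ℝ, 0 < b ^ 2 - 4 * a * c ∧
      (∀ x y : ℤ, (x, y) ≠ (0, 0) →
        √(b ^ 2 - 4 * a * c) ≤ t * |a * x ^ 2 + b * x * y + c * y ^ 2|) ∧
      ∀ s < t, 0 < s → ∃ x y : ℤ, (x, y) ≠ (0, 0) ∧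
        s * |a * x ^ 2 + b * x * y + c * y ^ 2| ≤ √(b ^ 2 - 4 * a * c) := by
  obtain ⟨a, b, c, hΔ, hfin, rfl⟩ := h
  have hs := Real.sqrt_pos.2 hΔ
  refine ⟨a, b, c, hΔ, fun x y hxy => ?_, fun s hs1 hs0 => ?_⟩
  · have h1 : _ ≤ markovVal a b c := le_iSup₂_of_le (x, y) hxy le_rfl
    have h2 : |a * x ^ 2 + b * x * y + c * y ^ 2| ≠ 0 := fun h0 => by
      simp only [h0, ENNReal.ofReal_zero, ENNReal.div_zero
        (ENNReal.ofReal_pos.2 hs).ne'] at h1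
      exact hfin (top_le_iff.1 h1)
    have h3 := ENNReal.toReal_mono hfin h1
    rw [ENNReal.toReal_div, ENNReal.toReal_ofReal hs.le,
      ENNReal.toReal_ofReal (abs_nonneg _)] at h3
    exact (div_le_iff₀ (lt_of_le_of_ne (abs_nonneg _) h2.symm)).1 h3
  · have h1 : ENNReal.ofReal s < markovVal a b c := (ENNReal.ofReal_lt_iff_lt_toReal hs0.le hfin).2 hs1
    obtain ⟨⟨x, y⟩, h2⟩ := lt_iSup_iff.1 h1
    obtain ⟨hxy, h3⟩ := lt_iSup_iff.1 h2
    refine ⟨x, y, hxy, ?_⟩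
    rw [← ENNReal.ofReal_le_ofReal_iff hs.le, ENNReal.ofReal_mul hs0.le]
    exact ENNReal.mul_le_of_le_div h3.le

theorem pos_of_mem_markovSpectrum {t : ℝ} (h : t ∈ MarkovSpectrum) : 0 < t := by
  obtain ⟨a, b, c, hΔ, h1, -⟩ := mem_markovSpectrum_bounds h
  have := (Real.sqrt_pos.2 hΔ).trans_le (h1 1 0 (by simp))
  exact pos_of_mul_pos_left this (abs_nonneg _)

theorem isApproxMarkovConst_of_mem {t : ℝ} (h : t ∈ MarkovSpectrum) :
    IsApproxMarkovConst t := by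
  have ht := pos_of_mem_markovSpectrum h
  obtain ⟨a, b, c, hΔ, hup, hlow⟩ := mem_markovSpectrum_bounds h
  intro ε hε
  set w := √(b ^ 2 - 4 * a * c) with hw
  have hw0 : 0 < w := Real.sqrt_pos.2 hΔ
  have hw2 : w ^ 2 = b ^ 2 - 4 * a * c := Real.sq_sqrt hΔ.le
  obtain ⟨x, y, hxy, h1⟩ := hlow (max (t - ε) (t / 2)) (max_lt (by linarith) (by linarith))
    (lt_max_of_lt_right (by linarith))
  obtain ⟨d, p, q, r, s, hd, rfl, rfl, hdet⟩ := exists_primitive_basis hxy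
  have hdetR : (p : ℝ) * s - q * r = 1 := by exact_mod_cast hdet
  set a' := a * p ^ 2 + b * p * q + c * q ^ 2 with ha'
  have hpq : (p, q) ≠ (0, 0) := by
    rintro h0
    simp only [Prod.mk.injEq] at h0
    simp [h0.1, h0.2] at hdet
  have ha0 : a' ≠ 0 := fun h0 => by
    have := hup p q hpq
    rw [← ha', h0] at this
    simp at this
    linarith
  have ha1 : (t - ε) * |a'| ≤ w := by
    have hdR : (1 : ℝ) ≤ d := by exact_mod_cast hd
    have h2 : a * ((d * p : ℤ) : ℝ) ^ 2 + b * ((d * p : ℤ) : ℝ) * ((d * q : ℤ) : ℝ) +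
        c * ((d * q : ℤ) : ℝ) ^ 2 = d ^ 2 * a' := by
      rw [ha']; push_cast; ring
    rw [h2, abs_mul, abs_of_nonneg (by positivity)] at h1
    refine le_trans ?_ h1
    refine mul_le_mul (le_max_left _ _) ?_ (abs_nonneg _) (le_max_of_le_right (by linarith))
    exact le_mul_of_one_le_left (abs_nonneg _) (one_le_pow₀ hdR)
  set b' := 2 * a * p * r + b * (p * s + q * r) + 2 * c * q * s with hb'
  set η₀ := (-b' - w) / (2 * a') with hη₀
  set ξ₀ := (-b' + w) / (2 * a') with hξ₀
  have hdiff : |ξ₀ - η₀| = w / |a'| := by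
    have : ξ₀ - η₀ = w / a' := by rw [hξ₀, hη₀]; field_simp; ring
    rw [this, abs_div, abs_of_pos hw0]
  have hfac (x y : ℝ) : a * (p * x + r * y) ^ 2 + b * (p * x + r * y) * (q * x + s * y) +
      c * (q * x + s * y) ^ 2 = a' * ((x - ξ₀ * y) * (x - η₀ * y)) := by
    have e1 : a' * (ξ₀ + η₀) = -b' := by rw [hξ₀, hη₀]; field_simp; ring
    have e2 : a' * (ξ₀ * η₀) = a * r ^ 2 + b * r * s + c * s ^ 2 := by
      have : a' * (ξ₀ * η₀) = (b' ^ 2 - w ^ 2) / (4 * a') := by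
        rw [hξ₀, hη₀]; field_simp; ring
      rw [this, hw2, div_eq_iff (by positivity)]
      have : b ^ 2 - 4 * a * c = (b ^ 2 - 4 * a * c) * ((p : ℝ) * s - q * r) ^ 2 := by
        rw [hdetR]; ring
      rw [this, hb', ha']
      ring
    linear_combination (x * y) * e1 - y ^ 2 * e2
  have hfl : (η₀ - ⌊η₀⌋ : ℝ) = Int.fract η₀ := rfl
  refine ⟨ξ₀ - ⌊η₀⌋, η₀ - ⌊η₀⌋, hfl ▸ Int.fract_nonneg _, hfl ▸ (Int.fract_lt_one _).le, ?_, ?_⟩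
  · rw [sub_sub_sub_cancel_right, hdiff, le_div_iff₀ (abs_pos.2 ha0)]
    exact ha1
  · intro x y hxy
    rw [sub_sub_sub_cancel_right, hdiff, div_le_iff₀ (abs_pos.2 ha0)]
    have h2 := hup (p * (x + ⌊η₀⌋ * y) + r * y) (q * (x + ⌊η₀⌋ * y) + s * y) (by
      intro h0
      simp only [Prod.mk.injEq] at h0
      have hy : y = 0 := by linear_combination p * h0.2 - q * h0.1 - y * hdet
      subst hy
      have hx : x = 0 := by linear_combination s * h0.1 - r * h0.2 - x * hdet
      exact hxy (by rw [hx]))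
    have h3 := hfac (x + ⌊η₀⌋ * y) y
    push_cast at h2
    rw [h3, abs_mul, abs_mul] at h2
    have e1 : (x : ℝ) + ⌊η₀⌋ * y - ξ₀ * y = x - (ξ₀ - ⌊η₀⌋) * y := by ring
    have e2 : (x : ℝ) + ⌊η₀⌋ * y - η₀ * y = x - (η₀ - ⌊η₀⌋) * y := by ring
    rw [e1, e2] at h2
    refine h2.trans ?_
    rw [mul_assoc, mul_comm |a'|]
    gcongr
    linarith

theorem isClosed_markovSpectrum : IsClosed MarkovSpectrum := by
  have hM : MarkovSpectrum = {t | 1 / 2 ≤ t ∧ IsApproxMarkovConst t} := by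
    ext t
    refine ⟨fun h => ?_, fun h => h.2.mem_markovSpectrum (by linarith [h.1])⟩
    exact ⟨(isApproxMarkovConst_of_mem h).one_half_le (pos_of_mem_markovSpectrum h),
      isApproxMarkovConst_of_mem h⟩
  rw [hM]
  refine isClosed_of_closure_subset fun t ht => ?_
  rw [Metric.mem_closure_iff] at ht
  constructor
  · refine le_of_forall_pos_le_add fun ε hε => ?_
    obtain ⟨u, hu, htu⟩ := ht ε hε
    have := (abs_lt.1 htu).1
    linarith [hu.1]
  · intro ε hε
    obtain ⟨u, hu, htu⟩ := ht (ε / 2) (by positivity)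
    rw [Real.dist_eq, abs_lt] at htu
    obtain ⟨ξ, η, h0, h1, h2, h3⟩ := hu.2 (ε / 2) (by positivity)
    refine ⟨ξ, η, h0, h1, by linarith, fun x y hxy => (h3 x y hxy).trans ?_⟩
    exact mul_le_mul_of_nonneg_right (by linarith) (by positivity)

theorem abs_sub_mul_le_add {x y z z' ρ : ℝ} (h : |z' - z| ≤ ρ) :
    |x - z' * y| ≤ |x - z * y| + ρ * |y| := by
  calc |x - z' * y| = |(x - z * y) - (z' - z) * y| := by ring_nf
    _ ≤ |x - z * y| + |(z' - z) * y| := abs_sub _ _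
    _ ≤ _ := by rw [abs_mul]; gcongr

theorem abs_sub_mul_abs_le {x y ξ η : ℝ} : |ξ - η| * |y| ≤ |x - ξ * y| + |x - η * y| := by
  rw [← abs_mul, show (ξ - η) * y = (x - η * y) - (x - ξ * y) by ring, add_comm]
  exact abs_sub _ _

/-- The substitution with matrix `!![A, B; C, D]` takes a form with roots `ξ₁`, `η₁` to one
with roots `ξ₂`, `η₂`, both pairs being close to `ξ`, `η`; it expands by `l` and contracts
by `m`. -/
structure IsNearReturn (ξ η ρ A B C D ξ₁ η₁ ξ₂ η₂ l m : ℝ) : Prop where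
  det : A * D - B * C = 1
  hξ₁ : |ξ₁ - ξ| ≤ ρ
  hη₁ : |η₁ - η| ≤ ρ
  hξ₂ : |ξ₂ - ξ| ≤ ρ
  hη₂ : |η₂ - η| ≤ ρ
  eA : A - η₁ * C = l
  eB : B - η₁ * D = -(η₂ * l)
  eA' : A - ξ₁ * C = m
  eB' : B - ξ₁ * D = -(ξ₂ * m)
  large : 1 + |ξ - η| ≤ ρ * |l|

theorem abs_sub_roots_near {ξ η ξ' η' ρ : ℝ} (hξ : |ξ' - ξ| ≤ ρ) (hη : |η' - η| ≤ ρ) :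
    |ξ - η| - 2 * ρ ≤ |ξ' - η'| ∧ |ξ' - η'| ≤ |ξ - η| + 2 * ρ := by
  have h : |(ξ' - η') - (ξ - η)| ≤ 2 * ρ := by
    rw [show (ξ' - η') - (ξ - η) = (ξ' - ξ) - (η' - η) by ring]
    exact (abs_sub _ _).trans (by linarith)
  have h1 := abs_sub_abs_le_abs_sub (ξ' - η') (ξ - η)
  have h2 := abs_sub_abs_le_abs_sub (ξ - η) (ξ' - η')
  rw [abs_sub_comm (ξ - η)] at h2
  constructor <;> linarith

namespace IsNearReturn

variable {ξ η ρ A B C D ξ₁ η₁ ξ₂ η₂ l m : ℝ}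

theorem mul_eq_one (h : IsNearReturn ξ η ρ A B C D ξ₁ η₁ ξ₂ η₂ l m) : l * (D + η₂ * C) = 1 := by
  linear_combination h.det - D * h.eA + C * h.eB

theorem abs_pos_left (h : IsNearReturn ξ η ρ A B C D ξ₁ η₁ ξ₂ η₂ l m) : 0 < |l| :=
  abs_pos.2 fun h0 => by simpa [h0] using h.mul_eq_one

theorem abs_mul_abs_le (h : IsNearReturn ξ η ρ A B C D ξ₁ η₁ ξ₂ η₂ l m) :
    |l| * |m| * (|ξ - η| - 2 * ρ) ≤ |ξ - η| + 2 * ρ := by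
  have h1 : l * m * (ξ₂ - η₂) = ξ₁ - η₁ := by
    linear_combination (ξ₁ - η₁) * h.mul_eq_one - l * (h.eB - h.eB') - l * η₂ * (h.eA - h.eA')
  rw [← abs_mul]
  calc |l * m| * (|ξ - η| - 2 * ρ) ≤ |l * m| * |ξ₂ - η₂| := by
        gcongr
        exact (abs_sub_roots_near h.hξ₂ h.hη₂).1
    _ = |ξ₁ - η₁| := by rw [← abs_mul, h1]
    _ ≤ _ := (abs_sub_roots_near h.hξ₁ h.hη₁).2

theorem bounds (h : IsNearReturn ξ η ρ A B C D ξ₁ η₁ ξ₂ η₂ l m) (hd : 1 ≤ |ξ - η|)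
    (hρ : 0 < ρ) (hρ' : ρ ≤ 1 / 64) :
    128 ≤ |l| ∧ 1 ≤ ρ * |l| ∧ |m| ≤ ρ ∧ 1 ≤ 2 * ρ * |C| ∧ |C| ≤ 2 * |l| := by
  have hl := h.abs_pos_left
  have h1 := h.large
  have h2 : 128 ≤ |l| := by nlinarith
  have h3 : |l| * |m| ≤ 2 := by
    have := h.abs_mul_abs_le
    have h0 : 0 ≤ |l| * |m| := by positivity
    nlinarith
  have h4 : |m| ≤ ρ := by
    have h5 : |m| * 2 ≤ |m| * (ρ * |l|) := by gcongr; linarith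
    nlinarith
  have h5 : C * (ξ₁ - η₁) = l - m := by linear_combination h.eA - h.eA'
  have h6 : |C| * |ξ₁ - η₁| = |l - m| := by rw [← abs_mul, h5]
  obtain ⟨h7, h8⟩ := abs_sub_roots_near h.hξ₁ h.hη₁
  have h9 := abs_sub l m
  have h10 := abs_sub_abs_le_abs_sub l m
  have hC := abs_nonneg C
  refine ⟨h2, by linarith, h4, ?_, ?_⟩
  · have h11 : |l| - |m| ≤ |C| * (|ξ - η| + 1) := by
      refine h10.trans (h6 ▸ ?_)
      gcongr
      linarith
    have h12 : 1 + |ξ - η| ≤ 2 * ρ * |C| * (1 + |ξ - η|) := by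
      nlinarith
    exact le_of_mul_le_mul_right (by linarith) (by linarith : 0 < 1 + |ξ - η|)
  · have h11 : |C| * (3 / 4) ≤ |l| + |m| := by
      refine le_trans ?_ (h6 ▸ h9)
      gcongr
      linarith
    linarith

theorem abs_add_mul_eq (h : IsNearReturn ξ η ρ A B C D ξ₁ η₁ ξ₂ η₂ l m) (q s : ℝ) :
    |l| * |q * B + s * D + η₂ * (q * A + s * C)| = |s + η₁ * q| := by
  rw [← abs_mul]
  congr 1
  linear_combination q * η₁ * h.det + s * h.mul_eq_one - q * B * h.eA + q * A * h.eB

theorem row_eq (h : IsNearReturn ξ η ρ A B C D ξ₁ η₁ ξ₂ η₂ l m) (q s : ℝ) :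
    q * A + s * C = q * l + C * (s + η₁ * q) := by
  linear_combination q * h.eA

theorem cone (h : IsNearReturn ξ η ρ A B C D ξ₁ η₁ ξ₂ η₂ l m) (hd : 1 ≤ |ξ - η|)
    (hρ : 0 < ρ) (hρ' : ρ ≤ 1 / 64) {x y : ℝ} (hxy : |x - ξ * y| ≤ 1 / 8 * |y|) :
    |A * x + B * y - ξ * (C * x + D * y)| ≤ 2 * ρ * |C * x + D * y| ∧ |y| ≤ |C * x + D * y| := by
  obtain ⟨h1, h2, h3, h4, -⟩ := h.bounds hd hρ hρ'
  set X := A * x + B * y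
  set Y := C * x + D * y with hY
  have hy := abs_nonneg y
  have e1 : |X - ξ₁ * Y| = |m| * |x - ξ₂ * y| := by
    rw [← abs_mul]
    congr 1
    linear_combination x * h.eA' + y * h.eB'
  have e2 : Y = C * (x - η₂ * y) + (D + η₂ * C) * y := by rw [hY]; ring
  have h5 : |x - ξ₂ * y| ≤ 1 / 4 * |y| := (abs_sub_mul_le_add h.hξ₂).trans (by nlinarith)
  have h6 : 3 / 4 * |y| ≤ |x - η₂ * y| := by
    have a1 := abs_sub_mul_abs_le (x := x) (y := y) (ξ := ξ₂) (η := η₂)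
    have a2 := (abs_sub_roots_near h.hξ₂ h.hη₂).1
    nlinarith [abs_sub_mul_le_add (x := x) (y := y) h.hξ₂]
  have h7 : |D + η₂ * C| ≤ ρ := by
    have := congrArg abs h.mul_eq_one
    rw [abs_mul, abs_one] at this
    nlinarith [abs_nonneg (D + η₂ * C)]
  have h8 : |C| * |x - η₂ * y| ≤ |Y| + |D + η₂ * C| * |y| := by
    rw [← abs_mul, ← abs_mul, show C * (x - η₂ * y) = Y - (D + η₂ * C) * y by rw [e2]; ring]
    exact abs_sub _ _
  have h9 : |D + η₂ * C| * |y| ≤ ρ * |y| := by gcongr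
  have h10 : |C| * (3 / 4 * |y|) ≤ |C| * |x - η₂ * y| := by gcongr
  have h11 : |y| ≤ 4 * ρ * |Y| := by
    have a1 : |y| * (3 / 4) ≤ 2 * ρ * |C| * (3 / 4 * |y|) := by nlinarith
    have a2 : 2 * ρ * (|C| * (3 / 4 * |y|)) ≤ 2 * ρ * (|Y| + ρ * |y|) := by
      gcongr
      linarith
    have a3 : ρ * (ρ * |y|) ≤ 1 / 64 * (1 / 64 * |y|) := by gcongr
    nlinarith
  have hY0 := abs_nonneg Y
  have h12 : |y| ≤ |Y| := by nlinarith
  refine ⟨?_, h12⟩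
  have h13 : |X - ξ₁ * Y| ≤ ρ * |Y| := by
    rw [e1]
    exact mul_le_mul h3 (by linarith) (abs_nonneg _) hρ.le
  have := abs_sub_mul_le_add (x := X) (y := Y) (z := ξ₁) (z' := ξ) (ρ := ρ)
    (by rw [abs_sub_comm]; exact h.hξ₁)
  linarith

theorem abs_add_mul_le_add {s q z z' ρ : ℝ} (h : |z' - z| ≤ ρ) :
    |s + z' * q| ≤ |s + z * q| + ρ * |q| := by
  have := abs_sub_mul_le_add (x := s) (y := -q) h
  simpa using this

theorem row (h : IsNearReturn ξ η ρ A B C D ξ₁ η₁ ξ₂ η₂ l m) (hd : 1 ≤ |ξ - η|)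
    (hρ : 0 < ρ) (hρ' : ρ ≤ 1 / 64) {q s : ℝ} (hqs : |s + η * q| ≤ 1 / 16 * |q|) :
    |q * B + s * D + η * (q * A + s * C)| ≤ 2 * ρ * |q * A + s * C| ∧
      2 * |q| ≤ |q * A + s * C| := by
  obtain ⟨h1, h2, -, -, h5⟩ := h.bounds hd hρ hρ'
  have hq := abs_nonneg q
  have h6 : |s + η₁ * q| ≤ 1 / 8 * |q| := (abs_add_mul_le_add h.hη₁).trans (by nlinarith)
  have h7 := h.abs_add_mul_eq q s
  have h8 : |l| * |q| ≤ |q * A + s * C| + |C| * |s + η₁ * q| := by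
    rw [← abs_mul, ← abs_mul, h.row_eq,
      show l * q = (q * l + C * (s + η₁ * q)) - C * (s + η₁ * q) by ring]
    exact abs_sub _ _
  have h9 : |C| * |s + η₁ * q| ≤ 2 * |l| * (1 / 8 * |q|) := by gcongr
  have h10 : 2 * |q| ≤ |q * A + s * C| := by nlinarith
  refine ⟨?_, h10⟩
  have h11 : |q * B + s * D + η₂ * (q * A + s * C)| ≤ ρ * |q * A + s * C| := by
    set z := |q * B + s * D + η₂ * (q * A + s * C)|
    have a1 : z ≤ z * (ρ * |l|) := le_mul_of_one_le_right (abs_nonneg _) h2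
    have a2 : z * (ρ * |l|) = ρ * |s + η₁ * q| := by rw [← h7]; ring
    have a3 : ρ * |s + η₁ * q| ≤ ρ * |q * A + s * C| :=
      mul_le_mul_of_nonneg_left (by linarith) hρ.le
    linarith
  have := abs_add_mul_le_add (s := q * B + s * D) (q := q * A + s * C) (z := η₂) (z' := η)
    (ρ := ρ) (by rw [abs_sub_comm]; exact h.hη₂)
  linarith

theorem row_zero_one (h : IsNearReturn ξ η ρ A B C D ξ₁ η₁ ξ₂ η₂ l m) (hd : 1 ≤ |ξ - η|)
    (hρ : 0 < ρ) (hρ' : ρ ≤ 1 / 64) : |D + η * C| ≤ 2 * ρ * |C| ∧ 1 ≤ |C| := by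
  obtain ⟨h1, h2, -, h4, -⟩ := h.bounds hd hρ hρ'
  have hC : 1 ≤ |C| := by nlinarith [abs_nonneg C]
  have h7 : |D + η₂ * C| ≤ ρ := by
    have := congrArg abs h.mul_eq_one
    rw [abs_mul, abs_one] at this
    nlinarith [abs_nonneg (D + η₂ * C)]
  have := abs_add_mul_le_add (s := D) (q := C) (z := η₂) (z' := η)
    (ρ := ρ) (by rw [abs_sub_comm]; exact h.hη₂)
  exact ⟨by nlinarith, hC⟩

theorem value (h : IsNearReturn ξ η ρ A B C D ξ₁ η₁ ξ₂ η₂ l m) (hd : 1 ≤ |ξ - η|)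
    (hρ : 0 < ρ) {τ : ℝ} (hρτ : ρ ≤ τ) (hτ : τ ≤ 1 / 64) {q s X Y x y : ℝ}
    (hq : |s + η * q| ≤ τ * |q|) (hX : |X - ξ * Y| ≤ τ * |Y|)
    (hq' : |q * B + s * D + η * (q * A + s * C)| ≤ τ * |q * A + s * C|)
    (hdet : (q * A + s * C) * X + (q * B + s * D) * Y = 1)
    (hin : |A * x + B * y - ξ * (C * x + D * y)| ≤ 1 / 8 * |C * x + D * y|)
    (hout : 1 / 8 * |y| < |x - ξ * y|)
    (hval : 1 - ρ ≤ |A * x + B * y - ξ₁ * (C * x + D * y)| *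
      |A * x + B * y - η₁ * (C * x + D * y)|) :
    (1 - τ) * (1 - 4 * τ) * (1 - 32 * τ) * (|ξ - η| - 2 * τ) ≤
      (1 + 4 * τ) * (|ξ - η| + 2 * τ) ^ 2 *
        |(q * (A * x + B * y) + s * (C * x + D * y)) * (X * y - Y * x)| := by
  obtain ⟨h1, h2, h3, h4, h5⟩ := h.bounds hd hρ (hρτ.trans hτ)
  have hτ0 : 0 < τ := hρ.trans_le hρτ
  set x₁ := A * x + B * y with hx₁
  set y₁ := C * x + D * y with hy₁
  set q' := q * A + s * C with hq'_def
  set d := |ξ - η| with hd_def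
  set a := |x₁ - η₁ * y₁| with ha
  set b := |x - ξ₂ * y| with hb
  have ha0 : 0 ≤ a := abs_nonneg _
  have hb0 : 0 ≤ b := abs_nonneg _
  have e1 : |x₁ - ξ₁ * y₁| = |m| * b := by
    rw [hb, ← abs_mul]
    congr 1
    linear_combination x * h.eA' + y * h.eB'
  have hqη : |s + η₁ * q| ≤ 2 * τ * |q| := by
    refine (abs_add_mul_le_add h.hη₁).trans ?_
    nlinarith [abs_nonneg q]
  have hy₁a : |y₁| ≤ 2 * a := by
    have a1 := abs_sub_mul_abs_le (x := x₁) (y := y₁) (ξ := ξ) (η := η)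
    have a2 := abs_sub_mul_le_add (x := x₁) (y := y₁) (z := η₁) (z' := η) (ρ := ρ)
      (by rw [abs_sub_comm]; exact h.hη₁)
    nlinarith [abs_nonneg y₁]
  have hyb : |y| ≤ 16 * b := by
    have a2 := abs_sub_mul_le_add (x := x) (y := y) (z := ξ₂) (z' := ξ) (ρ := ρ)
      (by rw [abs_sub_comm]; exact h.hξ₂)
    nlinarith [abs_nonneg y]
  have hU : |q| * (a * (1 - 4 * τ)) ≤ |q * x₁ + s * y₁| := by
    have a1 : |q| * a ≤ |q * x₁ + s * y₁| + |s + η₁ * q| * |y₁| := by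
      rw [ha, ← abs_mul, ← abs_mul,
        show q * (x₁ - η₁ * y₁) = (q * x₁ + s * y₁) - (s + η₁ * q) * y₁ by ring]
      exact abs_sub _ _
    have a2 : |s + η₁ * q| * |y₁| ≤ 2 * τ * |q| * (2 * a) := by gcongr
    linarith
  have hV : |Y| * (b * (1 - 32 * τ)) ≤ |X * y - Y * x| := by
    have a0 : |X - ξ₂ * Y| ≤ 2 * τ * |Y| := by
      refine (abs_sub_mul_le_add h.hξ₂).trans ?_
      nlinarith [abs_nonneg Y]
    have a1 : |Y| * b ≤ |X - ξ₂ * Y| * |y| + |X * y - Y * x| := by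
      rw [hb, ← abs_mul, ← abs_mul,
        show Y * (x - ξ₂ * y) = (X - ξ₂ * Y) * y - (X * y - Y * x) by ring]
      exact abs_sub _ _
    have a2 : |X - ξ₂ * Y| * |y| ≤ 2 * τ * |Y| * (16 * b) := by gcongr
    linarith
  have hone : 1 ≤ |q'| * |Y| * (d + 2 * τ) := by
    have a1 : |q' * (X - ξ * Y) + (q * B + s * D + η * q') * Y + q' * Y * (ξ - η)| ≤
        |q'| * |X - ξ * Y| + |q * B + s * D + η * q'| * |Y| + |q'| * |Y| * d := by
      refine (abs_add_three _ _ _).trans ?_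
      rw [abs_mul, abs_mul, abs_mul, abs_mul]
    have a2 : q' * (X - ξ * Y) + (q * B + s * D + η * q') * Y + q' * Y * (ξ - η) = 1 := by
      linear_combination hdet
    rw [a2, abs_one] at a1
    have a3 : |q'| * |X - ξ * Y| ≤ |q'| * (τ * |Y|) := by gcongr
    have a4 : |q * B + s * D + η * q'| * |Y| ≤ τ * |q'| * |Y| := by gcongr
    linarith
  have hq'le : |q'| ≤ |q| * |l| * (1 + 4 * τ) := by
    have a1 : |q'| ≤ |q| * |l| + |C| * |s + η₁ * q| := by
      rw [hq'_def, h.row_eq, ← abs_mul, ← abs_mul]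
      exact abs_add_le _ _
    have a2 : |C| * |s + η₁ * q| ≤ 2 * |l| * (2 * τ * |q|) := by gcongr
    linarith
  have hlm : |l| * |m| * (d - 2 * τ) ≤ d + 2 * τ := by
    have a1 : |l| * |m| * (d - 2 * τ) ≤ |l| * |m| * (d - 2 * ρ) := by gcongr
    have := h.abs_mul_abs_le
    linarith
  rw [e1] at hval
  have p1 : 0 ≤ 1 - 4 * τ := by linarith
  have p2 : 0 ≤ 1 - 32 * τ := by linarith
  have p3 : 0 ≤ d - 2 * τ := by linarith
  have p4 : 0 ≤ d + 2 * τ := by linarith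
  have p5 : 0 ≤ 1 + 4 * τ := by linarith
  have hone' : 1 ≤ |q| * |l| * (1 + 4 * τ) * |Y| * (d + 2 * τ) := by
    refine hone.trans ?_
    gcongr
  have hab : 1 - τ ≤ |m| * b * a := by linarith
  calc (1 - τ) * (1 - 4 * τ) * (1 - 32 * τ) * (d - 2 * τ)
      ≤ (|m| * b * a) * (1 - 4 * τ) * (1 - 32 * τ) * (d - 2 * τ) := by gcongr
    _ ≤ (|m| * b * a) * (1 - 4 * τ) * (1 - 32 * τ) * (d - 2 * τ) *
          (|q| * |l| * (1 + 4 * τ) * |Y| * (d + 2 * τ)) :=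
        le_mul_of_one_le_right (by positivity) hone'
    _ = (|q| * (a * (1 - 4 * τ))) * (|Y| * (b * (1 - 32 * τ))) * (1 + 4 * τ) * (d + 2 * τ) *
          (|l| * |m| * (d - 2 * τ)) := by ring
    _ ≤ |q * x₁ + s * y₁| * |X * y - Y * x| * (1 + 4 * τ) * (d + 2 * τ) * (d + 2 * τ) := by
        gcongr
    _ = _ := by rw [abs_mul]; ring

end IsNearReturn

/-- `(ξ, η)` is a limit of the pairs of roots of the forms obtained from `Q * (Q * α - P)` by
unimodular substitutions going to infinity in the direction of `α`; the number `α` may depend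
on the precision, but its best approximation constant has to be at most about `t`. -/
def IsLagrangeLimit (t ξ η : ℝ) : Prop :=
  ∀ ε > 0, ∃ α : ℝ, Irrational α ∧
    (∃ N : ℕ, ∀ P Q : ℤ, N ≤ |Q| → 1 ≤ (t + ε) * |(Q : ℝ) * (Q * α - P)|) ∧
    ∀ R : ℝ, ∃ p q r s : ℤ, ∃ ξ' η' : ℝ, p * s - q * r = 1 ∧ R ≤ |(q : ℝ)| ∧
      (s : ℝ) = -(η' * q) ∧ (s : ℝ) * α - r = -(ξ' * (q * α - p)) ∧
      |ξ' - ξ| ≤ ε ∧ |η' - η| ≤ ε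

theorem abs_form_mul_abs_sub_roots {α ξ η p q r s : ℝ} (hdet : p * s - q * r = 1)
    (hη : s = -(η * q)) (hξ : s * α - r = -(ξ * (q * α - p))) (x y : ℝ) :
    |(q * x + s * y) * ((q * x + s * y) * α - (p * x + r * y))| * |ξ - η| =
      |x - ξ * y| * |x - η * y| := by
  have h : q * (q * α - p) * (ξ - η) = -1 := by
    linear_combination (-1 : ℝ) * hdet + q * hξ - (q * α - p) * hη
  have h1 : q * x + s * y = q * (x - η * y) := by rw [hη]; ring
  have h2 : (q * x + s * y) * α - (p * x + r * y) = (q * α - p) * (x - ξ * y) := by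
    linear_combination y * hξ
  rw [h2, h1, ← abs_mul, ← abs_mul, ← abs_neg]
  congr 1
  linear_combination -(x - η * y) * (x - ξ * y) * h

theorem IsLagrangeConst.exists_primitive {α t s : ℝ} (hα : Irrational α)
    (h : IsLagrangeConst α t) (hs : s < t) (hs0 : 0 < s) (n : ℕ) :
    ∃ p q r s' : ℤ, p * s' - q * r = 1 ∧ n ≤ |q| ∧ q ≠ 0 ∧ s * |(q : ℝ) * (q * α - p)| ≤ 1 := by
  obtain ⟨δ, hδ, hn⟩ := hα.exists_pos_le_abs_mul_sub n
  obtain ⟨M, hM⟩ := exists_nat_gt (1 / (s * δ))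
  obtain ⟨P, Q, hQ, hPQ⟩ := h.2 s hs hs0 (M + 1)
  have hQ0 : Q ≠ 0 := by rintro rfl; simp at hQ; omega
  obtain ⟨d, p, q, r, s', hd, rfl, rfl, hdet⟩ :=
    exists_primitive_basis (x := P) (y := Q) (by simp [hQ0])
  have hq0 : q ≠ 0 := right_ne_zero_of_mul hQ0
  have hdR : (1 : ℝ) ≤ d := by exact_mod_cast hd
  have hv : ((d * q : ℤ) : ℝ) * α - (d * p : ℤ) = d * (q * α - p) := by push_cast; ring
  rw [hv, abs_mul, abs_mul, abs_of_pos (by linarith : (0 : ℝ) < d)] at hPQ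
  refine ⟨p, q, r, s', hdet, ?_, hq0, ?_⟩
  · by_contra! hlt
    have h1 := hn p q hq0 hlt.le
    have h2 : (M : ℝ) + 1 ≤ |((d * q : ℤ) : ℝ)| := by exact_mod_cast hQ
    have h3 : ((M : ℝ) + 1) * δ ≤ |((d * q : ℤ) : ℝ)| * (d * |(q : ℝ) * α - p|) := by
      refine mul_le_mul h2 (h1.trans ?_) hδ.le (abs_nonneg _)
      exact le_mul_of_one_le_left (abs_nonneg _) hdR
    rw [div_lt_iff₀ (by positivity)] at hM
    nlinarith [mul_le_mul_of_nonneg_left h3 hs0.le, mul_pos hs0 hδ]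
  · refine le_trans ?_ hPQ
    rw [abs_mul]
    push_cast
    rw [abs_mul, abs_of_pos (by linarith : (0 : ℝ) < d)]
    gcongr
    · exact le_mul_of_one_le_left (abs_nonneg _) hdR
    · exact le_mul_of_one_le_left (abs_nonneg _) hdR

theorem IsLagrangeConst.exists_roots {α t s : ℝ} (hα : Irrational α)
    (h : IsLagrangeConst α t) (hs : s < t) (hs0 : 0 < s) (n : ℕ) :
    ∃ p q r s' : ℤ, ∃ ξ η : ℝ, p * s' - q * r = 1 ∧ n ≤ |q| ∧
      (s' : ℝ) = -(η * q) ∧ (s' : ℝ) * α - r = -(ξ * (q * α - p)) ∧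
      0 ≤ η ∧ η ≤ 1 ∧ s ≤ |ξ - η| ∧ |(q : ℝ) * (q * α - p)| * |ξ - η| = 1 := by
  obtain ⟨p, q, r, s', hdet, hn, hq0, hle⟩ := h.exists_primitive hα hs hs0 n
  have hq : (q : ℝ) ≠ 0 := by exact_mod_cast hq0
  have he : (q : ℝ) * α - p ≠ 0 := sub_ne_zero.2 ((hα.intCast_mul hq0).ne_int p)
  set η₀ : ℝ := -(s' / q) with hη₀
  set j := ⌊η₀⌋ with hj
  set ξ : ℝ := -(((s' + j * q : ℤ) * α - (r + j * p : ℤ)) / (q * α - p)) with hξ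
  have hdet' : p * (s' + j * q) - q * (r + j * p) = 1 := by linear_combination hdet
  have e1 : ((s' + j * q : ℤ) : ℝ) = -(Int.fract η₀ * q) := by
    rw [← Int.self_sub_floor, ← hj, hη₀]
    push_cast
    field_simp
    ring
  have e2 : ((s' + j * q : ℤ) : ℝ) * α - (r + j * p : ℤ) = -(ξ * (q * α - p)) := by
    rw [hξ, neg_mul, neg_neg, div_mul_cancel₀ _ he]
  have e3 := abs_form_mul_abs_sub_roots (by exact_mod_cast hdet') e1 e2 1 0
  simp only [mul_one, mul_zero, add_zero, sub_zero, abs_one] at e3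
  refine ⟨p, q, r + j * p, s' + j * q, ξ, Int.fract η₀, hdet', hn, e1, e2,
    Int.fract_nonneg _, (Int.fract_lt_one _).le, ?_, e3⟩
  have := mul_le_mul_of_nonneg_right hle (abs_nonneg (ξ - Int.fract η₀))
  rwa [mul_assoc, e3, mul_one, one_mul] at this

theorem IsLagrangeConst.exists_isLagrangeLimit {α t : ℝ} (hα : Irrational α) (ht : 1 ≤ t)
    (h : IsLagrangeConst α t) :
    ∃ ξ η : ℝ, |ξ - η| = t ∧ 0 ≤ η ∧ η ≤ 1 ∧ IsLagrangeLimit t ξ η := by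
  have hpos (n : ℕ) : 0 < t - 1 / ((n : ℝ) + 1 + 1) := by
    have : 1 / ((n : ℝ) + 1 + 1) < 1 := by
      rw [div_lt_one (by positivity)]
      linarith [n.cast_nonneg (α := ℝ)]
    linarith
  choose p q r s ξ η hdet hn hs hr h0 h1 hlow hprod using fun n : ℕ =>
    h.exists_roots hα (sub_lt_self _ (by positivity)) (hpos n) n
  have hup (c : ℝ) (hc : t < c) : ∃ N : ℕ, ∀ n ≥ N, |ξ n - η n| ≤ c := by
    obtain ⟨N, hN⟩ := h.1 c hc
    refine ⟨N, fun n hnN => ?_⟩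
    have h2 := hN (p n) (q n) (le_trans (by exact_mod_cast hnN) (hn n))
    have h3 := mul_le_mul_of_nonneg_right h2 (abs_nonneg (ξ n - η n))
    rwa [mul_assoc, hprod, one_mul, mul_one] at h3
  obtain ⟨N, hN⟩ := hup (t + 1) (by linarith)
  have hmem (n : ℕ) : (ξ (N + n), η (N + n)) ∈ Set.Icc (-t - 1) (t + 2) ×ˢ Set.Icc (0 : ℝ) 1 := by
    have h6 := abs_le.1 (hN (N + n) (by omega))
    have := h0 (N + n)
    have := h1 (N + n)
    exact ⟨⟨by linarith, by linarith⟩, ⟨h0 _, h1 _⟩⟩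
  obtain ⟨⟨ξ', η'⟩, hmem', φ, hφ, hlim⟩ :=
    (isCompact_Icc.prod isCompact_Icc).tendsto_subseq hmem
  have hξ : Filter.Tendsto (fun n => ξ (N + φ n)) Filter.atTop (nhds ξ') :=
    (continuous_fst.tendsto _).comp hlim
  have hη : Filter.Tendsto (fun n => η (N + φ n)) Filter.atTop (nhds η') :=
    (continuous_snd.tendsto _).comp hlim
  have hge (n : ℕ) : n ≤ N + φ n := hφ.le_apply.trans (Nat.le_add_left _ _)
  refine ⟨ξ', η', le_antisymm ?_ ?_, hmem'.2.1, hmem'.2.2, fun ε hε =>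
    ⟨α, hα, h.1 _ (by linarith), fun R => ?_⟩⟩
  · refine le_of_forall_pos_le_add fun ε hε => ?_
    obtain ⟨M, hM⟩ := hup (t + ε) (by linarith)
    refine le_of_tendsto (hξ.sub hη).abs (Filter.eventually_atTop.2 ⟨M, fun n hn => ?_⟩)
    exact hM _ (hn.trans (hge n))
  · have h2 : Filter.Tendsto (fun n : ℕ => t - 1 / ((n : ℝ) + 1)) Filter.atTop (nhds (t - 0)) :=
      tendsto_const_nhds.sub tendsto_one_div_add_atTop_nhds_zero_nat
    rw [sub_zero] at h2
    refine le_of_tendsto_of_tendsto' h2 (hξ.sub hη).abs fun n => le_trans ?_ (hlow (N + φ n))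
    have h3 : (n : ℝ) ≤ ((N + φ n : ℕ) : ℝ) := by exact_mod_cast hge n
    gcongr
    linarith
  · obtain ⟨m, hm⟩ := exists_nat_ge R
    obtain ⟨n, hnm, hn1, hn2⟩ := ((Filter.eventually_ge_atTop m).and
      (((Metric.tendsto_nhds.1 hξ) ε hε).and ((Metric.tendsto_nhds.1 hη) ε hε))).exists
    refine ⟨p _, q _, r _, s _, ξ (N + φ n), η (N + φ n), hdet _, ?_, hs _, hr _, hn1.le, hn2.le⟩
    have h2 : (m : ℤ) ≤ |q (N + φ n)| :=
      le_trans (by exact_mod_cast hnm.trans (hge n)) (hn (N + φ n))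
    exact hm.trans (by exact_mod_cast h2)

theorem IsLagrangeLimit.of_forall_pos {t ξ η : ℝ}
    (h : ∀ ε > 0, ∃ t' ξ' η', |t' - t| ≤ ε ∧ |ξ' - ξ| ≤ ε ∧ |η' - η| ≤ ε ∧
      IsLagrangeLimit t' ξ' η') : IsLagrangeLimit t ξ η := by
  intro ε hε
  obtain ⟨t', ξ', η', ht, hξ, hη, hlim⟩ := h (ε / 2) (by positivity)
  obtain ⟨α, hα, ⟨N, hN⟩, hR⟩ := hlim (ε / 2) (by positivity)
  refine ⟨α, hα, ⟨N, fun P Q hQ => (hN P Q hQ).trans ?_⟩, fun R => ?_⟩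
  · have := (abs_le.1 ht).2
    exact mul_le_mul_of_nonneg_right (by linarith) (abs_nonneg _)
  · obtain ⟨p, q, r, s, ξ₁, η₁, h1, h2, h3, h4, h5, h6⟩ := hR R
    exact ⟨p, q, r, s, ξ₁, η₁, h1, h2, h3, h4,
      (abs_sub_le _ ξ' _).trans (by linarith), (abs_sub_le _ η' _).trans (by linarith)⟩

theorem ne_zero_of_det_eq_one {p q r s x y : ℤ} (hdet : p * s - q * r = 1)
    (hxy : (x, y) ≠ (0, 0)) (hq : |y| < |q|) : q * x + s * y ≠ 0 := by
  intro h
  have hdvd : q ∣ y := ⟨-(p * x + r * y), by linear_combination p * h - y * hdet⟩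
  have hy : y = 0 := Int.eq_zero_of_abs_lt_dvd ((abs_dvd q y).2 hdvd) hq
  subst hy
  have hq0 : q ≠ 0 := by rintro rfl; simp at hq
  have hx : x = 0 := by simpa [hq0] using h
  exact hxy (by rw [hx])

theorem IsLagrangeLimit.mem_markovSpectrum {t ξ η : ℝ} (ht : 0 < t) (hd : |ξ - η| = t)
    (h : IsLagrangeLimit t ξ η) : t ∈ MarkovSpectrum := by
  refine mem_markovSpectrum_of_roots ht hd fun x y hxy => ?_
  have key : ∀ ε > 0, 2 * ε < t → t - 2 * ε ≤
      (t + ε) * ((|(x : ℝ) - ξ * y| + ε * |(y : ℝ)|) * (|(x : ℝ) - η * y| + ε * |(y : ℝ)|)) := by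
    intro ε hε hεt
    obtain ⟨α, hα, ⟨N, hN⟩, hR⟩ := h ε hε
    obtain ⟨δ, hδ, hδN⟩ := hα.exists_pos_le_abs_mul_sub N
    set B := |(x : ℝ) - ξ * y| + ε * |(y : ℝ)| + 1 with hB
    have hB0 : 0 < B := by positivity
    have hc : 0 < δ * (t - 2 * ε) := mul_pos hδ (by linarith)
    obtain ⟨p, q, r, s, ξ', η', hdet, hq, hη', hξ', hξ, hη⟩ :=
      hR (max (|(y : ℝ)| + 1) ((N + 1) * B / (δ * (t - 2 * ε))))
    have hq1 := (le_max_left _ _).trans hq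
    have hq2 := (le_max_right _ _).trans hq
    have hform := abs_form_mul_abs_sub_roots (by exact_mod_cast hdet) hη' hξ' (x : ℝ) y
    have hQ0 : q * x + s * y ≠ 0 := ne_zero_of_det_eq_one hdet hxy (by
      have : |(y : ℝ)| < |(q : ℝ)| := by linarith
      exact_mod_cast this)
    have hdiff := (abs_sub_roots_near hξ hη).1
    rw [hd] at hdiff
    by_cases hQ : (N : ℤ) ≤ |q * x + s * y|
    · have h1 := hN (p * x + r * y) _ hQ
      push_cast at h1
      have h2 := mul_le_mul_of_nonneg_right h1 (abs_nonneg (ξ' - η'))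
      rw [mul_assoc, hform, one_mul] at h2
      refine hdiff.trans (h2.trans ?_)
      gcongr
      · exact abs_sub_mul_le_add hξ
      · exact abs_sub_mul_le_add hη
    · exfalso
      have hQ' := not_le.1 hQ
      have h1 := hδN (p * x + r * y) _ hQ0 hQ'.le
      push_cast at h1
      have h2 : (1 : ℝ) ≤ |(q : ℝ) * x + s * y| := by
        exact_mod_cast Int.one_le_abs hQ0
      have h3 : |(q : ℝ) * x + s * y| < N := by exact_mod_cast hQ'
      have h4 : (q : ℝ) * x + s * y = q * (x - η' * y) := by rw [hη']; ring
      rw [abs_mul] at hform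
      have h5 : δ * (t - 2 * ε) ≤ B * |(x : ℝ) - η' * y| := by
        calc δ * (t - 2 * ε) ≤ (|(q : ℝ) * x + s * y| *
              |((q : ℝ) * x + s * y) * α - (p * x + r * y)|) * |ξ' - η'| := by
              refine mul_le_mul ?_ hdiff (by linarith) (by positivity)
              exact h1.trans (le_mul_of_one_le_left (abs_nonneg _) h2)
          _ = |(x : ℝ) - ξ' * y| * |(x : ℝ) - η' * y| := hform
          _ ≤ _ := by
              gcongr
              exact (abs_sub_mul_le_add hξ).trans (by rw [hB]; linarith)
      rw [h4, abs_mul] at h3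
      rw [div_le_iff₀ hc] at hq2
      have h6 : (N + 1 : ℝ) * B ≤ N * B := by
        calc (N + 1 : ℝ) * B ≤ |(q : ℝ)| * (δ * (t - 2 * ε)) := hq2
          _ ≤ |(q : ℝ)| * (B * |(x : ℝ) - η' * y|) := by gcongr
          _ = |(q : ℝ)| * |(x : ℝ) - η' * y| * B := by ring
          _ ≤ N * B := by gcongr
      linarith
  have hlim : t - 2 * 0 ≤
      (t + 0) * ((|(x : ℝ) - ξ * y| + 0 * |(y : ℝ)|) * (|(x : ℝ) - η * y| + 0 * |(y : ℝ)|)) := by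
    have c1 : Continuous fun ε : ℝ => t - 2 * ε := by fun_prop
    have c2 : Continuous fun ε : ℝ => (t + ε) *
        ((|(x : ℝ) - ξ * y| + ε * |(y : ℝ)|) * (|(x : ℝ) - η * y| + ε * |(y : ℝ)|)) := by fun_prop
    refine le_of_tendsto_of_tendsto ((c1.tendsto 0).mono_left nhdsWithin_le_nhds)
      ((c2.tendsto 0).mono_left nhdsWithin_le_nhds) (b := nhdsWithin 0 (Set.Ioi 0)) ?_
    filter_upwards [Ioo_mem_nhdsGT (by linarith : (0 : ℝ) < t / 2)] with ε hε
    exact key ε hε.1 (by linarith [hε.2])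
  simp only [mul_zero, sub_zero, add_zero, zero_mul] at hlim
  exact le_of_mul_le_mul_left (by linarith) ht

/-- A unimodular substitution whose matrix `!![A, B; C, D]` almost preserves a form with roots
`ξ`, `η`, contracts the directions near `ξ` strongly, and has good values on the primitive
vectors near the direction `ξ`. -/
structure IsGluingStep (ξ η τ : ℝ) (A B C D : ℤ) : Prop where
  det : A * D - B * C = 1
  cone : ∀ x y : ℝ, |x - ξ * y| ≤ 1 / 8 * |y| →
    |A * x + B * y - ξ * (C * x + D * y)| ≤ τ * |C * x + D * y| ∧ |y| ≤ |C * x + D * y|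
  row_zero_one : |(D : ℝ) + η * C| ≤ τ * |(C : ℝ)| ∧ 1 ≤ |(C : ℝ)|
  row : ∀ q s : ℝ, |s + η * q| ≤ 1 / 16 * |q| →
    |q * B + s * D + η * (q * A + s * C)| ≤ τ * |q * A + s * C| ∧ 2 * |q| ≤ |q * A + s * C|
  value : ∀ (τ' q s X Y : ℝ) (x y : ℤ), τ ≤ τ' → τ' ≤ 1 / 64 →
    |s + η * q| ≤ τ' * |q| → |X - ξ * Y| ≤ τ' * |Y| →
    |q * B + s * D + η * (q * A + s * C)| ≤ τ' * |q * A + s * C| →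
    (q * A + s * C) * X + (q * B + s * D) * Y = 1 →
    |(A * x + B * y : ℝ) - ξ * (C * x + D * y)| ≤ 1 / 8 * |(C * x + D * y : ℝ)| →
    1 / 8 * |(y : ℝ)| < |x - ξ * y| →
    (1 - τ') * (1 - 4 * τ') * (1 - 32 * τ') * (|ξ - η| - 2 * τ') ≤
      (1 + 4 * τ') * (|ξ - η| + 2 * τ') ^ 2 *
        |(q * (A * x + B * y) + s * (C * x + D * y)) * (X * y - Y * x)|

theorem one_sub_le_abs_mul_abs {t ξ η ρ α ξ₁ η₁ : ℝ} {N : ℕ} {p q r s x y : ℤ}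
    (hd : |ξ - η| = t) (ht : 1 ≤ t) (hρ : 0 < ρ) (hρ' : ρ ≤ 1 / 64)
    (hN : ∀ P Q : ℤ, N ≤ |Q| → 1 ≤ (t + ρ / 3) * |(Q : ℝ) * (Q * α - P)|)
    (hdet : p * s - q * r = 1) (hq : 2 * N + 1 ≤ |(q : ℝ)|) (hs : (s : ℝ) = -(η₁ * q))
    (hr : (s : ℝ) * α - r = -(ξ₁ * (q * α - p))) (hξ₁ : |ξ₁ - ξ| ≤ ρ / 3)
    (hη₁ : |η₁ - η| ≤ ρ / 3) (hy : y ≠ 0) (hxy : |x - ξ * y| ≤ 1 / 8 * |(y : ℝ)|) :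
    1 - ρ ≤ |x - ξ₁ * y| * |x - η₁ * y| := by
  have hge : (1 : ℝ) ≤ |(y : ℝ)| := by exact_mod_cast Int.one_le_abs hy
  have hN0 : (0 : ℝ) ≤ N := N.cast_nonneg
  have h7 := (abs_sub_roots_near hξ₁ hη₁).1
  rw [hd] at h7
  have h8 : |(y : ℝ)| ≤ 2 * |x - η₁ * y| := by
    have a1 := abs_sub_mul_abs_le (x := x) (y := y) (ξ := ξ) (η := η)
    have a2 := abs_sub_mul_le_add (x := x) (y := y) (z := η₁) (z' := η)
      (ρ := ρ / 3) (by rw [abs_sub_comm]; exact hη₁)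
    have a3 : 1 * |(y : ℝ)| ≤ |ξ - η| * |(y : ℝ)| := by
      gcongr
      exact hd ▸ ht
    have a4 : ρ / 3 * |(y : ℝ)| ≤ 1 / 64 * |(y : ℝ)| :=
      mul_le_mul_of_nonneg_right (by linarith) (abs_nonneg _)
    linarith
  have h10 : (N : ℤ) ≤ |q * x + s * y| := by
    have : (N : ℝ) ≤ |(q : ℝ) * x + s * y| := by
      rw [show (q : ℝ) * x + s * y = q * (x - η₁ * y) by rw [hs]; ring, abs_mul]
      have := mul_le_mul hq (by linarith : 1 / 2 ≤ |x - η₁ * y|) (by norm_num) (abs_nonneg _)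
      linarith
    exact_mod_cast this
  have h12 := mul_le_mul_of_nonneg_right (hN (p * x + r * y) _ h10) (abs_nonneg (ξ₁ - η₁))
  push_cast at h12
  rw [mul_assoc, abs_form_mul_abs_sub_roots (by exact_mod_cast hdet) hs hr, one_mul] at h12
  refine le_of_mul_le_mul_left (le_trans ?_ h12) (by linarith : 0 < t + ρ / 3)
  nlinarith [mul_le_mul_of_nonneg_left ht hρ.le]

theorem IsLagrangeLimit.exists_isGluingStep {t ξ η τ : ℝ} (h : IsLagrangeLimit t ξ η)
    (hd : |ξ - η| = t) (ht : 1 ≤ t) (hτ : 0 < τ) (hτ' : τ ≤ 1 / 64) :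
    ∃ A B C D : ℤ, IsGluingStep ξ η τ A B C D := by
  obtain ⟨ρ, rfl⟩ : ∃ ρ, τ = 2 * ρ := ⟨τ / 2, by ring⟩
  have hρ : 0 < ρ := by linarith
  obtain ⟨α, hα, ⟨N, hN⟩, hR⟩ := h (ρ / 3) (by positivity)
  obtain ⟨p₁, q₁, r₁, s₁, ξ₁, η₁, hdet₁, hq₁, hs₁, hr₁, hξ₁, hη₁⟩ := hR (2 * N + 1)
  obtain ⟨p₂, q₂, r₂, s₂, ξ₂, η₂, hdet₂, hq₂, hs₂, hr₂, hξ₂, hη₂⟩ :=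
    hR (|(q₁ : ℝ)| * (1 + t) / ρ)
  have hN0 : (0 : ℝ) ≤ N := N.cast_nonneg
  have hq₁0 : (0 : ℝ) < |(q₁ : ℝ)| := by linarith
  have hq₁ne : (q₁ : ℝ) ≠ 0 := abs_pos.1 hq₁0
  have he₁ : (q₁ : ℝ) * α - p₁ ≠ 0 :=
    sub_ne_zero.2 ((hα.intCast_mul (by exact_mod_cast hq₁ne)).ne_int p₁)
  have hdet₁' : (p₁ : ℝ) * s₁ - q₁ * r₁ = 1 := by exact_mod_cast hdet₁
  have hdet₂' : (p₂ : ℝ) * s₂ - q₂ * r₂ = 1 := by exact_mod_cast hdet₂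
  have hret : IsNearReturn ξ η ρ (s₁ * p₂ - r₁ * q₂ : ℤ) (s₁ * r₂ - r₁ * s₂ : ℤ)
      (p₁ * q₂ - q₁ * p₂ : ℤ) (p₁ * s₂ - q₁ * r₂ : ℤ) ξ₁ η₁ ξ₂ η₂ (q₂ / q₁)
      ((q₂ * α - p₂) / (q₁ * α - p₁)) := by
    push_cast
    refine ⟨?_, by linarith, by linarith, by linarith, by linarith, ?_, ?_, ?_, ?_, ?_⟩
    · linear_combination (p₂ * s₂ - q₂ * r₂ : ℝ) * hdet₁' + hdet₂'
    · rw [eq_div_iff hq₁ne]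
      linear_combination q₂ * hdet₁' - (p₁ * q₂ - q₁ * p₂ : ℝ) * hs₁
    · rw [← mul_div_assoc, ← neg_div, eq_div_iff hq₁ne, ← hs₂]
      linear_combination s₂ * hdet₁' - (p₁ * s₂ - q₁ * r₂ : ℝ) * hs₁
    · rw [eq_div_iff he₁]
      linear_combination (q₂ * α - p₂) * hdet₁' - (p₁ * q₂ - q₁ * p₂ : ℝ) * hr₁
    · rw [← mul_div_assoc, ← neg_div, eq_div_iff he₁, ← hr₂]
      linear_combination (s₂ * α - r₂) * hdet₁' - (p₁ * s₂ - q₁ * r₂ : ℝ) * hr₁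
    · rw [div_le_iff₀ hρ] at hq₂
      rw [hd, abs_div, ← mul_div_assoc, le_div_iff₀ hq₁0]
      linarith
  have hd1 : 1 ≤ |ξ - η| := hd ▸ ht
  have hρ' : ρ ≤ 1 / 64 := by linarith
  refine ⟨_, _, _, _, ?_, fun x y => hret.cone hd1 hρ hρ', hret.row_zero_one hd1 hρ hρ',
    fun q s => hret.row hd1 hρ hρ', ?_⟩
  · linear_combination (p₂ * s₂ - q₂ * r₂) * hdet₁ + hdet₂
  intro τ' q s X Y x y hτ1 hτ2 h1 h2 h3 h4 h5 h6
  refine hret.value hd1 hρ (by linarith) hτ2 h1 h2 h3 h4 h5 h6 ?_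
  have hdet := hret.det
  generalize s₁ * p₂ - r₁ * q₂ = A at *
  generalize s₁ * r₂ - r₁ * s₂ = B at *
  generalize p₁ * q₂ - q₁ * p₂ = C at *
  generalize p₁ * s₂ - q₁ * r₂ = D at *
  have hne : C * x + D * y ≠ 0 := by
    intro h0
    have h0' : (C * x + D * y : ℝ) = 0 := by exact_mod_cast h0
    rw [h0', mul_zero, sub_zero, abs_zero, mul_zero, abs_nonpos_iff] at h5
    have hy : (y : ℝ) = 0 := by linear_combination A * h0' - C * h5 - y * hdet
    have hx : (x : ℝ) = 0 := by linear_combination D * h5 - B * h0' - x * hdet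
    simp [hx, hy] at h6
  simpa using one_sub_le_abs_mul_abs (x := A * x + B * y) hd ht hρ hρ' hN hdet₁ hq₁ hs₁ hr₁
    hξ₁ hη₁ hne (by simpa using h5)

theorem exists_matrix_products (A B C D : ℕ → ℤ) :
    ∃ p q r s : ℕ → ℤ, (p 0 = 1 ∧ q 0 = 0 ∧ r 0 = 0 ∧ s 0 = 1) ∧
      ∀ k, p (k + 1) = p k * A k + r k * C k ∧ q (k + 1) = q k * A k + s k * C k ∧
        r (k + 1) = p k * B k + r k * D k ∧ s (k + 1) = q k * B k + s k * D k := by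
  let M : ℕ → ℤ × ℤ × ℤ × ℤ := fun n => Nat.rec (1, 0, 0, 1)
    (fun k v => (v.1 * A k + v.2.2.1 * C k, v.2.1 * A k + v.2.2.2 * C k,
      v.1 * B k + v.2.2.1 * D k, v.2.1 * B k + v.2.2.2 * D k)) n
  exact ⟨fun k => (M k).1, fun k => (M k).2.1, fun k => (M k).2.2.1, fun k => (M k).2.2.2,
    ⟨rfl, rfl, rfl, rfl⟩, fun k => ⟨rfl, rfl, rfl, rfl⟩⟩

/-- The precision used at the `k`-th stage of the gluing. -/
noncomputable def gluingPrecision (k : ℕ) : ℝ := 1 / (64 * (k + 1))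

theorem gluingPrecision_pos (k : ℕ) : 0 < gluingPrecision k := by
  unfold gluingPrecision
  positivity

theorem gluingPrecision_antitone : Antitone gluingPrecision := fun a b h => by
  unfold gluingPrecision
  gcongr

theorem gluingPrecision_le (k : ℕ) : gluingPrecision k ≤ 1 / 64 := by
  have := gluingPrecision_antitone (Nat.zero_le k)
  norm_num [gluingPrecision] at this ⊢
  exact this

theorem tendsto_gluingPrecision : Filter.Tendsto gluingPrecision Filter.atTop (nhds 0) := by
  have := tendsto_one_div_add_atTop_nhds_zero_nat (𝕜 := ℝ) |>.const_mul (1 / 64)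
  rw [mul_zero] at this
  refine this.congr fun k => ?_
  rw [gluingPrecision, one_div_mul_one_div]

/-- `!![p k, r k; q k, s k]` is the product of the first `k` of a sequence of gluing steps. -/
structure IsGluingSequence (ξ η : ℝ) (A B C D p q r s : ℕ → ℤ) : Prop where
  step : ∀ k, IsGluingStep ξ η (gluingPrecision (k + 1)) (A k) (B k) (C k) (D k)
  zero : p 0 = 1 ∧ q 0 = 0 ∧ r 0 = 0 ∧ s 0 = 1
  succ : ∀ k, p (k + 1) = p k * A k + r k * C k ∧ q (k + 1) = q k * A k + s k * C k ∧
    r (k + 1) = p k * B k + r k * D k ∧ s (k + 1) = q k * B k + s k * D k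

namespace IsGluingSequence

variable {ξ η α : ℝ} {A B C D p q r s : ℕ → ℤ}

theorem det (h : IsGluingSequence ξ η A B C D p q r s) (k : ℕ) :
    p k * s k - q k * r k = 1 := by
  induction k with
  | zero => obtain ⟨h1, h2, h3, h4⟩ := h.zero; simp [h1, h2, h3, h4]
  | succ k ih =>
    obtain ⟨h1, h2, h3, h4⟩ := h.succ k
    rw [h1, h2, h3, h4]
    linear_combination (A k * D k - B k * C k) * ih + (h.step k).det

theorem det_real (h : IsGluingSequence ξ η A B C D p q r s) (k : ℕ) :
    (p k : ℝ) * s k - q k * r k = 1 := by exact_mod_cast h.det k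

theorem cone (h : IsGluingSequence ξ η A B C D p q r s) (k : ℕ) {x y : ℝ}
    (hxy : |x - ξ * y| ≤ 1 / 8 * |y|) :
    |p k * x + r k * y - ξ * (q k * x + s k * y)| ≤ 1 / 8 * |q k * x + s k * y| ∧
      |y| ≤ |q k * x + s k * y| := by
  induction k generalizing x y with
  | zero => obtain ⟨h1, h2, h3, h4⟩ := h.zero; simpa [h1, h2, h3, h4] using hxy
  | succ k ih =>
    obtain ⟨h1, h2⟩ := (h.step k).cone x y hxy
    have h3 := gluingPrecision_le (k + 1)
    obtain ⟨h4, h5⟩ := ih (h1.trans (mul_le_mul_of_nonneg_right (by linarith) (abs_nonneg _)))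
    obtain ⟨e1, e2, e3, e4⟩ := h.succ k
    have e5 : (p (k + 1) : ℝ) * x + r (k + 1) * y =
        p k * (A k * x + B k * y) + r k * (C k * x + D k * y) := by
      rw [e1, e3]; push_cast; ring
    have e6 : (q (k + 1) : ℝ) * x + s (k + 1) * y =
        q k * (A k * x + B k * y) + s k * (C k * x + D k * y) := by
      rw [e2, e4]; push_cast; ring
    rw [e5, e6]
    exact ⟨h4, h2.trans h5⟩

theorem coords_succ (h : IsGluingSequence ξ η A B C D p q r s) (k : ℕ) (u v : ℝ) :
    s k * u - r k * v = A k * (s (k + 1) * u - r (k + 1) * v) +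
        B k * (p (k + 1) * v - q (k + 1) * u) ∧
      p k * v - q k * u = C k * (s (k + 1) * u - r (k + 1) * v) +
        D k * (p (k + 1) * v - q (k + 1) * u) := by
  obtain ⟨e1, e2, e3, e4⟩ := h.succ k
  have hdet : (A k : ℝ) * D k - B k * C k = 1 := by exact_mod_cast (h.step k).det
  rw [e1, e2, e3, e4]
  push_cast
  constructor
  · linear_combination -(s k * u - r k * v) * hdet
  · linear_combination -(p k * v - q k * u) * hdet

theorem exists_direction (h : IsGluingSequence ξ η A B C D p q r s) :
    ∃ α : ℝ, ∀ k, |s k * α - r k - ξ * (p k - q k * α)| ≤ 1 / 8 * |p k - q k * α| := by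
  let S : ℕ → Set ℝ := fun k =>
    {z | |s k * z - r k - ξ * (p k - q k * z)| ≤ 1 / 8 * |p k - q k * z|}
  have hclosed (k : ℕ) : IsClosed (S k) := isClosed_le (by fun_prop) (by fun_prop)
  have hmono (k : ℕ) : S (k + 1) ⊆ S k := by
    intro z hz
    obtain ⟨e1, e2⟩ := h.coords_succ k z 1
    simp only [mul_one] at e1 e2
    have h3 := gluingPrecision_le (k + 1)
    simp only [S, Set.mem_ofPred_eq] at hz ⊢
    rw [e1, e2]
    exact ((h.step k).cone _ _ hz).1.trans
      (mul_le_mul_of_nonneg_right (by linarith) (abs_nonneg _))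
  have hne (k : ℕ) : (S k).Nonempty := by
    obtain ⟨-, h2⟩ := h.cone k (x := ξ) (y := 1) (by simp)
    rw [abs_one] at h2
    set w : ℝ := q k * ξ + s k * 1 with hw
    have hw0 : w ≠ 0 := fun h0 => by rw [h0, abs_zero] at h2; linarith
    refine ⟨(p k * ξ + r k) / w, ?_⟩
    have e1 : s k * ((p k * ξ + r k) / w) - r k = ξ / w := by
      field_simp
      rw [hw]
      linear_combination ξ * h.det_real k
    have e2 : p k - q k * ((p k * ξ + r k) / w) = 1 / w := by
      field_simp
      rw [hw]
      linear_combination h.det_real k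
    simp only [S, Set.mem_ofPred_eq]
    rw [e1, e2, mul_one_div, sub_self, abs_zero]
    positivity
  have hcpt : IsCompact (S 0) := by
    refine (isCompact_Icc (a := ξ - 1 / 8) (b := ξ + 1 / 8)).of_isClosed_subset (hclosed 0)
      fun z hz => ?_
    obtain ⟨h1, h2, h3, h4⟩ := h.zero
    simp only [S, h1, h2, h3, h4, Set.mem_ofPred_eq, Int.cast_one, Int.cast_zero, one_mul,
      zero_mul, sub_zero, mul_one, abs_one] at hz
    obtain ⟨h5, h6⟩ := abs_le.1 hz
    exact ⟨by linarith, by linarith⟩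
  obtain ⟨α, hα⟩ := IsCompact.nonempty_iInter_of_sequence_nonempty_isCompact_isClosed
    S hmono hne hcpt hclosed
  exact ⟨α, fun k => Set.mem_iInter.1 hα k⟩

theorem row_near (h : IsGluingSequence ξ η A B C D p q r s) (k : ℕ) :
    |s (k + 1) + η * q (k + 1)| ≤ gluingPrecision (k + 1) * |(q (k + 1) : ℝ)| ∧
      (2 : ℝ) ^ k ≤ |(q (k + 1) : ℝ)| := by
  induction k with
  | zero =>
    obtain ⟨h1, h2, h3, h4⟩ := h.zero
    obtain ⟨-, e2, -, e4⟩ := h.succ 0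
    simpa [e2, e4, h2, h4] using (h.step 0).row_zero_one
  | succ k ih =>
    obtain ⟨-, e2, -, e4⟩ := h.succ (k + 1)
    have h3 := gluingPrecision_le (k + 1)
    obtain ⟨h1, h2⟩ := (h.step (k + 1)).row (q (k + 1)) (s (k + 1))
      (ih.1.trans (mul_le_mul_of_nonneg_right (by linarith) (abs_nonneg _)))
    rw [e2, e4]
    push_cast
    refine ⟨h1, ?_⟩
    rw [pow_succ]
    linarith [ih.2]

theorem exists_coords (h : IsGluingSequence ξ η A B C D p q r s) (P Q : ℤ) :
    ∃ x y : ℕ → ℤ, ∀ k, P = p k * x k + r k * y k ∧ Q = q k * x k + s k * y k ∧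
      (x k : ℝ) = A k * x (k + 1) + B k * y (k + 1) ∧
      (y k : ℝ) = C k * x (k + 1) + D k * y (k + 1) := by
  refine ⟨fun k => s k * P - r k * Q, fun k => p k * Q - q k * P, fun k => ⟨?_, ?_, ?_, ?_⟩⟩
  · linear_combination -P * h.det k
  · linear_combination -Q * h.det k
  · push_cast
    exact (h.coords_succ k P Q).1
  · push_cast
    exact (h.coords_succ k P Q).2

end IsGluingSequence

/-- `α` is the number whose direction is prescribed by a sequence of gluing steps,
and `(X k, Y k)` are the coordinates of `(α, 1)` in the `k`-th basis. -/
structure IsGluedNumber (ξ η α : ℝ) (A B C D p q r s : ℕ → ℤ) (X Y : ℕ → ℝ) : Prop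
    extends IsGluingSequence ξ η A B C D p q r s where
  X_eq : ∀ k, X k = s k * α - r k
  Y_eq : ∀ k, Y k = p k - q k * α
  near : ∀ k, |X k - ξ * Y k| ≤ 1 / 8 * |Y k|

namespace IsGluedNumber

variable {ξ η α : ℝ} {A B C D p q r s : ℕ → ℤ} {X Y : ℕ → ℝ}

theorem pair_eq_one (h : IsGluedNumber ξ η α A B C D p q r s X Y) (k : ℕ) :
    q k * X k + s k * Y k = 1 := by
  rw [h.X_eq, h.Y_eq]
  linear_combination h.det_real k

theorem dir_near (h : IsGluedNumber ξ η α A B C D p q r s X Y) (k : ℕ) :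
    |X k - ξ * Y k| ≤ gluingPrecision (k + 1) * |Y k| := by
  obtain ⟨e1, e2⟩ := h.coords_succ k α 1
  simp only [mul_one, ← h.X_eq, ← h.Y_eq] at e1 e2
  rw [e1, e2]
  exact ((h.step k).cone _ _ (h.near (k + 1))).1

theorem abs_Y_pos (h : IsGluedNumber ξ η α A B C D p q r s X Y) (k : ℕ) : 0 < |Y k| := by
  rw [abs_pos]
  intro h0
  have h1 := h.near k
  rw [h0, abs_zero, mul_zero, mul_zero, sub_zero, abs_nonpos_iff] at h1
  simpa [h0, h1] using h.pair_eq_one k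

theorem mul_sub_eq (h : IsGluedNumber ξ η α A B C D p q r s X Y) {P Q x y : ℤ} {k : ℕ}
    (hP : P = p k * x + r k * y) (hQ : Q = q k * x + s k * y) :
    (Q : ℝ) * α - P = X k * y - Y k * x := by
  rw [h.X_eq, h.Y_eq, hP, hQ]
  push_cast
  ring

theorem exists_not_cone (h : IsGluedNumber ξ η α A B C D p q r s X Y) (hd : 1 ≤ |ξ - η|)
    {x y : ℕ → ℤ} {Q : ℤ} (hQ0 : Q ≠ 0) (hQ : ∀ k, Q = q k * x k + s k * y k) :
    ∃ k, 1 / 8 * |(y k : ℝ)| < |x k - ξ * y k| := by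
  by_contra! hcone
  obtain ⟨n, hn⟩ := pow_unbounded_of_one_lt (2 * |(Q : ℝ)|) one_lt_two
  obtain ⟨h1, h2⟩ := h.row_near n
  have h3 := hcone (n + 1)
  have h4 : y (n + 1) ≠ 0 := by
    intro h0
    rw [h0, Int.cast_zero, abs_zero, mul_zero, mul_zero, sub_zero, abs_nonpos_iff,
      Int.cast_eq_zero] at h3
    exact hQ0 (by rw [hQ (n + 1), h0, h3]; ring)
  have h5 : (1 : ℝ) ≤ |(y (n + 1) : ℝ)| := by exact_mod_cast Int.one_le_abs h4
  have h6 : (Q : ℝ) = q (n + 1) * x (n + 1) + s (n + 1) * y (n + 1) := by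
    exact_mod_cast hQ (n + 1)
  generalize (q (n + 1) : ℝ) = q' at *
  generalize (s (n + 1) : ℝ) = s' at *
  generalize (x (n + 1) : ℝ) = x' at *
  generalize (y (n + 1) : ℝ) = y' at *
  have h7 : 7 / 8 * |y'| ≤ |x' - η * y'| := by
    have a1 := abs_sub_mul_abs_le (x := x') (y := y') (ξ := ξ) (η := η)
    have a2 := mul_le_mul_of_nonneg_right hd (abs_nonneg y')
    linarith
  have h8 : |q'| * |x' - η * y'| ≤ |(Q : ℝ)| + |s' + η * q'| * |y'| := by
    rw [← abs_mul, ← abs_mul,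
      show q' * (x' - η * y') = Q - (s' + η * q') * y' by rw [h6]; ring]
    exact abs_sub _ _
  have h9 : |s' + η * q'| * |y'| ≤ 1 / 64 * |q'| * |y'| := by
    refine mul_le_mul_of_nonneg_right (h1.trans ?_) (abs_nonneg _)
    exact mul_le_mul_of_nonneg_right (gluingPrecision_le _) (abs_nonneg _)
  have h10 := mul_le_mul_of_nonneg_left h7 (abs_nonneg q')
  have h11 := mul_le_mul_of_nonneg_left h5 (abs_nonneg q')
  linarith [abs_nonneg (Q : ℝ)]

theorem irrational (h : IsGluedNumber ξ η α A B C D p q r s X Y) (hd : 1 ≤ |ξ - η|) :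
    Irrational α := by
  rintro ⟨a, ha⟩
  obtain ⟨x, y, hxy⟩ := h.exists_coords a.num a.den
  obtain ⟨k, hk⟩ := h.exists_not_cone hd (Int.natCast_ne_zero.2 a.den_nz) fun k => (hxy k).2.1
  have h1 := h.mul_sub_eq (hxy k).1 (hxy k).2.1
  have h2 : (((a.den : ℕ) : ℤ) : ℝ) * α - a.num = 0 := by
    rw [← ha, sub_eq_zero]
    exact_mod_cast Rat.den_mul_eq_num a
  have h3 : Y k * (x k - ξ * y k) = y k * (X k - ξ * Y k) := by linear_combination h1 - h2
  have h4 := congrArg abs h3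
  rw [abs_mul, abs_mul] at h4
  have h5 := mul_le_mul_of_nonneg_left (h.near k) (abs_nonneg (y k : ℝ))
  have h6 := mul_lt_mul_of_pos_left hk (h.abs_Y_pos k)
  linarith

theorem abs_Y_le (h : IsGluedNumber ξ η α A B C D p q r s X Y) {P Q x y : ℤ} {k : ℕ}
    (hP : P = p k * x + r k * y) (hQ : Q = q k * x + s k * y)
    (hxy : 1 / 8 * |(y : ℝ)| < |x - ξ * y|) : |Y k| ≤ 16 * |(Q : ℝ) * α - P| := by
  rw [h.mul_sub_eq hP hQ]
  have h1 : 1 / 8 ≤ |x - ξ * y| := by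
    rcases eq_or_ne y 0 with rfl | hy
    · have hx : x ≠ 0 := by rintro rfl; simp at hxy
      have : (1 : ℝ) ≤ |(x : ℝ)| := by exact_mod_cast Int.one_le_abs hx
      simp only [Int.cast_zero, mul_zero, sub_zero]
      linarith
    · have : (1 : ℝ) ≤ |(y : ℝ)| := by exact_mod_cast Int.one_le_abs hy
      linarith
  have h2 : |Y k| * |x - ξ * y| ≤ |X k - ξ * Y k| * |(y : ℝ)| + |X k * y - Y k * x| := by
    rw [← abs_mul, ← abs_mul,
      show Y k * (x - ξ * y) = (X k - ξ * Y k) * y - (X k * y - Y k * x) by ring]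
    exact abs_sub _ _
  have h3 := mul_le_mul_of_nonneg_right (h.near k) (abs_nonneg (y : ℝ))
  have h4 := mul_le_mul_of_nonneg_left hxy.le (abs_nonneg (Y k))
  have h5 : |X k - ξ * Y k| * |(y : ℝ)| ≤ 1 / 64 * |Y k| * |(y : ℝ)| := by
    refine mul_le_mul_of_nonneg_right ((h.dir_near k).trans ?_) (abs_nonneg _)
    exact mul_le_mul_of_nonneg_right (gluingPrecision_le _) (abs_nonneg _)
  have h6 := mul_le_mul_of_nonneg_left h1 (abs_nonneg (Y k))
  linarith

theorem exists_le_value (h : IsGluedNumber ξ η α A B C D p q r s X Y) (hd : 1 ≤ |ξ - η|)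
    {c : ℝ} (hc : |ξ - η| < c) :
    ∃ N : ℕ, ∀ P Q : ℤ, N ≤ |Q| → 1 ≤ c * |(Q : ℝ) * (Q * α - P)| := by
  set t := |ξ - η| with ht
  let f : ℝ → ℝ := fun τ => (1 - τ) * (1 - 4 * τ) * (1 - 32 * τ) * (t - 2 * τ)
  let g : ℝ → ℝ := fun τ => (1 + 4 * τ) * (t + 2 * τ) ^ 2
  have hf : Continuous f := by fun_prop
  have hg : Continuous g := by fun_prop
  have h1 : ∀ᶠ k in Filter.atTop, 0 < f (gluingPrecision k) ∧
      g (gluingPrecision k) < c * f (gluingPrecision k) := by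
    refine (tendsto_gluingPrecision.eventually (p := fun τ => 0 < f τ) ?_).and
      (tendsto_gluingPrecision.eventually (p := fun τ => g τ < c * f τ) ?_)
    · exact hf.continuousAt.eventually_const_lt (by simp only [f]; linarith)
    · refine hg.continuousAt.eventually_lt (continuous_const.mul hf).continuousAt ?_
      simp only [f, g]
      nlinarith
  obtain ⟨K, hK⟩ := Filter.eventually_atTop.1 h1
  have h2 : ∀ᶠ N : ℕ in Filter.atTop, ∀ j ∈ Finset.range (K + 2), 16 ≤ N * |Y j| :=
    (Filter.eventually_all_finset _).2 fun j _ =>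
      (tendsto_natCast_atTop_atTop.atTop_mul_const (h.abs_Y_pos j)).eventually_ge_atTop 16
  obtain ⟨N, hN, hN1⟩ := (h2.and (Filter.eventually_ge_atTop 1)).exists
  refine ⟨N, fun P Q hQN => ?_⟩
  have hQ0 : Q ≠ 0 := by rintro rfl; simp at hQN; omega
  have hQR : (N : ℝ) ≤ |(Q : ℝ)| := by exact_mod_cast hQN
  obtain ⟨x, y, hxy⟩ := h.exists_coords P Q
  have hex := h.exists_not_cone hd hQ0 fun k => (hxy k).2.1
  have hexit := Nat.find_spec hex
  have hmin := fun m => Nat.find_min hex (m := m)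
  generalize Nat.find hex = n at hexit hmin
  obtain hn | hn := lt_or_ge n (K + 2)
  · have h3 := h.abs_Y_le (hxy n).1 (hxy n).2.1 hexit
    have h4 := hN n (Finset.mem_range.2 hn)
    have h5 := mul_le_mul hQR h3 (abs_nonneg _) (abs_nonneg _)
    rw [abs_mul]
    nlinarith
  · obtain ⟨k, rfl⟩ : ∃ k, n = k + 1 + 1 := ⟨n - 2, by omega⟩
    obtain ⟨e1, e2, e3, e4⟩ := h.succ (k + 1)
    have hin := not_lt.1 (hmin (k + 1) (by omega))
    obtain ⟨-, hQk, hxk, hyk⟩ := hxy (k + 1)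
    have hQk' : (Q : ℝ) = q (k + 1) * x (k + 1) + s (k + 1) * y (k + 1) := by exact_mod_cast hQk
    obtain ⟨hf0, hfg⟩ := hK (k + 1) (by omega)
    have hanti := gluingPrecision_antitone
    have h3 := (h.step (k + 1)).value (gluingPrecision (k + 1)) (q (k + 1)) (s (k + 1))
      (X (k + 1 + 1)) (Y (k + 1 + 1)) (x (k + 1 + 1)) (y (k + 1 + 1)) (hanti (Nat.le_succ _))
      (gluingPrecision_le _) (h.row_near k).1
      ((h.dir_near _).trans (mul_le_mul_of_nonneg_right (hanti (by omega)) (abs_nonneg _)))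
      (by
        have := (h.row_near (k + 1)).1
        rw [e2, e4] at this
        push_cast at this
        exact this.trans (mul_le_mul_of_nonneg_right (hanti (by omega)) (abs_nonneg _)))
      (by
        have := h.pair_eq_one (k + 1 + 1)
        rw [e2, e4] at this
        exact_mod_cast this)
      (by rwa [← hxk, ← hyk]) hexit
    rw [← hxk, ← hyk, ← hQk', ← h.mul_sub_eq (hxy (k + 1 + 1)).1 (hxy (k + 1 + 1)).2.1] at h3
    have h4 := mul_le_mul_of_nonneg_right hfg.le (abs_nonneg ((Q : ℝ) * (Q * α - P)))
    refine le_of_mul_le_mul_left ?_ hf0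
    change f _ ≤ g _ * _ at h3
    linarith

theorem exists_value_le (h : IsGluedNumber ξ η α A B C D p q r s X Y) {c : ℝ}
    (hc : c < |ξ - η|) (N : ℕ) :
    ∃ P Q : ℤ, N ≤ |Q| ∧ c * |(Q : ℝ) * (Q * α - P)| ≤ 1 := by
  have h1 : ∀ᶠ k in Filter.atTop, gluingPrecision k < (|ξ - η| - c) / 2 :=
    tendsto_gluingPrecision.eventually_lt_const (by linarith)
  obtain ⟨k, hk, hkN⟩ :=
    (((Filter.tendsto_add_atTop_nat 1).eventually h1).and (Filter.eventually_ge_atTop N)).exists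
  obtain ⟨h2, h3⟩ := h.row_near k
  refine ⟨p (k + 1), q (k + 1), ?_, ?_⟩
  · have h4 : N < 2 ^ k := hkN.trans_lt Nat.lt_two_pow_self
    have h5 : (N : ℝ) < 2 ^ k := by exact_mod_cast h4
    have h6 : (N : ℝ) ≤ |(q (k + 1) : ℝ)| := by linarith
    exact_mod_cast h6
  · have h4 := h.dir_near (k + 1)
    have h5 := h.pair_eq_one (k + 1)
    have h6 := gluingPrecision_antitone (Nat.le_succ (k + 1))
    rw [abs_mul, abs_sub_comm, ← h.Y_eq]
    generalize (q (k + 1) : ℝ) = q' at *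
    generalize (s (k + 1) : ℝ) = s' at *
    generalize X (k + 1) = X' at *
    generalize Y (k + 1) = Y' at *
    have h7 : |q'| * |Y'| * |ξ - η| ≤ 1 + |q'| * |X' - ξ * Y'| + |s' + η * q'| * |Y'| := by
      rw [← abs_mul, ← abs_mul, ← abs_mul, ← abs_mul, ← abs_one (α := ℝ), ← h5,
        show q' * Y' * (ξ - η) = (q' * X' + s' * Y') + -(q' * (X' - ξ * Y')) +
          -((s' + η * q') * Y') by ring]
      exact (abs_add_three _ _ _).trans (by rw [abs_neg, abs_neg])
    have h8 : |q'| * |X' - ξ * Y'| ≤ |q'| * (gluingPrecision (k + 1) * |Y'|) := by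
      gcongr
      exact h4.trans (mul_le_mul_of_nonneg_right h6 (abs_nonneg _))
    have h9 := mul_le_mul_of_nonneg_right h2 (abs_nonneg Y')
    have h10 : c * (|q'| * |Y'|) ≤ (|ξ - η| - 2 * gluingPrecision (k + 1)) * (|q'| * |Y'|) := by
      gcongr
      linarith
    linarith

end IsGluedNumber

theorem IsLagrangeLimit.exists_isLagrangeConst {t ξ η : ℝ} (h : IsLagrangeLimit t ξ η)
    (hd : |ξ - η| = t) (ht : 1 ≤ t) : ∃ α, Irrational α ∧ IsLagrangeConst α t := by
  choose A B C D hstep using fun k : ℕ => h.exists_isGluingStep hd ht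
    (gluingPrecision_pos (k + 1)) (gluingPrecision_le (k + 1))
  obtain ⟨p, q, r, s, h0, hs⟩ := exists_matrix_products A B C D
  have hseq : IsGluingSequence ξ η A B C D p q r s := ⟨hstep, h0, hs⟩
  obtain ⟨α, hα⟩ := hseq.exists_direction
  have hglue : IsGluedNumber ξ η α A B C D p q r s _ _ :=
    ⟨hseq, fun _ => rfl, fun _ => rfl, hα⟩
  subst hd
  exact ⟨α, hglue.irrational ht, fun c hc => hglue.exists_le_value ht hc,
    fun c hc _ => hglue.exists_value_le hc⟩

theorem mem_lagrangeSpectrum_iff_exists_isLagrangeLimit {t : ℝ} :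
    t ∈ LagrangeSpectrum ↔
      1 ≤ t ∧ ∃ ξ η : ℝ, |ξ - η| = t ∧ 0 ≤ η ∧ η ≤ 1 ∧ IsLagrangeLimit t ξ η := by
  rw [mem_lagrangeSpectrum_iff]
  refine and_congr_right fun ht => ⟨?_, ?_⟩
  · rintro ⟨α, hα, h⟩
    exact h.exists_isLagrangeLimit hα ht
  · rintro ⟨ξ, η, hd, -, -, h⟩
    exact h.exists_isLagrangeConst hd ht

theorem isClosed_lagrangeSpectrum : IsClosed LagrangeSpectrum := by
  refine IsSeqClosed.isClosed fun u t hu hut => ?_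
  simp only [mem_lagrangeSpectrum_iff_exists_isLagrangeLimit] at hu ⊢
  choose h1 ξ η hd hη0 hη1 hlim using hu
  have ht : 1 ≤ t := ge_of_tendsto' hut h1
  obtain ⟨b, hb⟩ := hut.bddAbove_range
  have hmem (n : ℕ) : (ξ n, η n) ∈ Set.Icc (-b) (b + 1) ×ˢ Set.Icc (0 : ℝ) 1 := by
    have h2 := abs_le.1 ((hd n).le.trans (hb (Set.mem_range_self n)))
    have := hη0 n
    have := hη1 n
    exact ⟨⟨by linarith, by linarith⟩, ⟨hη0 n, hη1 n⟩⟩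
  obtain ⟨⟨ξ', η'⟩, hmem', φ, hφ, hlim'⟩ :=
    (isCompact_Icc.prod isCompact_Icc).tendsto_subseq hmem
  have hξ : Filter.Tendsto (fun n => ξ (φ n)) Filter.atTop (nhds ξ') :=
    (continuous_fst.tendsto _).comp hlim'
  have hη : Filter.Tendsto (fun n => η (φ n)) Filter.atTop (nhds η') :=
    (continuous_snd.tendsto _).comp hlim'
  have hu' : Filter.Tendsto (fun n => u (φ n)) Filter.atTop (nhds t) :=
    hut.comp hφ.tendsto_atTop
  refine ⟨ht, ξ', η', tendsto_nhds_unique (hξ.sub hη).abs (by simpa only [hd] using hu'),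
    hmem'.2.1, hmem'.2.2, IsLagrangeLimit.of_forall_pos fun ε hε => ?_⟩
  obtain ⟨n, hn1, hn2, hn3⟩ := (((Metric.tendsto_nhds.1 hu') ε hε).and
    (((Metric.tendsto_nhds.1 hξ) ε hε).and ((Metric.tendsto_nhds.1 hη) ε hε))).exists
  exact ⟨u (φ n), ξ (φ n), η (φ n), hn1.le, hn2.le, hn3.le, hlim _⟩

/-- The Lagrange spectrum is contained in the Markov spectrum, and both are closed subsets
of the real line. -/
theorem lagrange_subset_markov_and_closed :
    LagrangeSpectrum ⊆ MarkovSpectrum ∧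
    IsClosed LagrangeSpectrum ∧ IsClosed MarkovSpectrum := by
  refine ⟨fun t ht => ?_, isClosed_lagrangeSpectrum, isClosed_markovSpectrum⟩
  obtain ⟨h1, ξ, η, hd, -, -, h⟩ := mem_lagrangeSpectrum_iff_exists_isLagrangeLimit.1 ht
  exact h.mem_markovSpectrum (zero_lt_one.trans_le h1) hd
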